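/- For a length space X with basepoints * and *′, any ρ-path k from *′ to * induces an isometry from (X̄,*) to (X̄,*′) given by c ↦ k⋆c, and the composition of this isometry with the endpoint map equals the endpoint map on (X̄,*). -/

import Mathlib

open Set

/-- An arclength-parameterized weakly normal rectifiable path (ρ-path) in a metric
space `X`.  The path is defined on `[0, len]`, extended constantly outside. -/
structure RPath (X : Type*) [MetricSpace X] where
  /-- the length of the path -/
  len : ℝ
  len_nonneg : 0 ≤ len
  toFun : ℝ → X
  contOn : ContinuousOn toFun (Icc 0 len)
  /-- arclength parameterization: the length of the restriction to `[s,t]` is `t - s`. -/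
  arclength : ∀ s t : ℝ, 0 ≤ s → s ≤ t → t ≤ len →
    eVariationOn toFun (Icc s t) = ENNReal.ofReal (t - s)
  clamp_left : ∀ t : ℝ, t ≤ 0 → toFun t = toFun 0
  clamp_right : ∀ t : ℝ, len ≤ t → toFun t = toFun len
  /-- weak normality: no nontrivial subsegment `[u,v]` with equal endpoints is
  null-homotopic in its own image rel endpoints. -/
  weaklyNormal : ¬ ∃ u v : ℝ, 0 ≤ u ∧ u < v ∧ v ≤ len ∧ toFun u = toFun v ∧
    ∃ H : ℝ × ℝ → X, ContinuousOn H (Icc u v ×ˢ Icc 0 1) ∧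
      (∀ t ∈ Icc u v, H (t, 0) = toFun t) ∧
      (∀ t ∈ Icc u v, H (t, 1) = toFun u) ∧
      (∀ s ∈ Icc (0:ℝ) 1, H (u, s) = toFun u ∧ H (v, s) = toFun v) ∧
      (∀ p ∈ Icc u v ×ˢ Icc (0:ℝ) 1, H p ∈ toFun '' Icc u v)

namespace RPath

variable {X : Type*} [MetricSpace X]

/-- `c` starts at the point `p`. -/
def StartsAt (c : RPath X) (p : X) : Prop := c.toFun 0 = p

/-- `c` ends at the point `p`. -/
def EndsAt (c : RPath X) (p : X) : Prop := c.toFun c.len = p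

/-- The length `L(c₁ ∧ c₂)` of the longest common initial segment of two paths. -/
noncomputable def wedgeLen (c₁ c₂ : RPath X) : ℝ :=
  sSup {b : ℝ | 0 ≤ b ∧ b ≤ c₁.len ∧ b ≤ c₂.len ∧ ∀ t ∈ Icc 0 b, c₁.toFun t = c₂.toFun t}

/-- The distance `d(c₁,c₂) = L(c₁) + L(c₂) - 2 L(c₁ ∧ c₂)`. -/
noncomputable def rhoDist (c₁ c₂ : RPath X) : ℝ :=
  c₁.len + c₂.len - 2 * wedgeLen c₁ c₂

end RPath

/-- A length space: a metric space with at least two points in which any two points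
are joined by paths of length arbitrarily close to the distance between them. -/
def IsLengthSpace (X : Type*) [MetricSpace X] : Prop :=
  (∃ x y : X, x ≠ y) ∧
  ∀ x y : X, ∀ ε : ℝ, 0 < ε → ∃ (c : ℝ → X) (b : ℝ), 0 ≤ b ∧
    ContinuousOn c (Icc 0 b) ∧ c 0 = x ∧ c b = y ∧
    eVariationOn c (Icc 0 b) < ENNReal.ofReal (dist x y + ε)

namespace RPath

variable {X : Type*} [MetricSpace X]

/-- The amount of cancellation between a path `k` and a following path `c`: the
length of the maximal final segment of `k` that coincides, with reversed
orientation, with an initial segment of `c`. -/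
noncomputable def cancelAmt (k c : RPath X) : ℝ :=
  sSup {s : ℝ | 0 ≤ s ∧ s ≤ k.len ∧ s ≤ c.len ∧
    ∀ t ∈ Set.Icc 0 s, k.toFun (k.len - t) = c.toFun t}

/-- `m` is the cancelled concatenation `k ⋆ c`: it is obtained from the concatenation
`k ∗ c` by removing the maximal final segment of `k` coinciding with an initial
segment of `c` with reversed orientation, together with that initial segment of
`c`. -/
def IsCancelConcat (k c m : RPath X) : Prop :=
  m.len = k.len + c.len - 2 * cancelAmt k c ∧
  (∀ t ∈ Set.Icc 0 (k.len - cancelAmt k c), m.toFun t = k.toFun t) ∧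
  (∀ t ∈ Set.Icc (k.len - cancelAmt k c) m.len,
    m.toFun t = c.toFun (t - (k.len - cancelAmt k c) + cancelAmt k c))

/-- `r` is the reverse `c⁻¹` of the path `c`. -/
def IsReverse (c r : RPath X) : Prop :=
  r.len = c.len ∧ ∀ t ∈ Set.Icc 0 c.len, r.toFun t = c.toFun (c.len - t)

end RPath

/-!
Distances are preserved because a weakly normal path never folds back on itself: comparing the
cancellations of `k` against `c₁` and `c₂` then determines the common initial segment of `k ⋆ c₁`
and `k ⋆ c₂`. For surjectivity, `d` is hit by `k⁻¹ ⋆ d`, and the real work is to show that the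
cancelled concatenation of two ρ-paths exists, i.e. that it is again weakly normal.

Suppose a loop in it is null-homotopic in its own image `Γ`. By a Sard-type argument almost every
level of the distance to a point is attained only finitely often along the loop, so that `Γ` is cut
by finitely many points into small pieces. Recording the pieces that a path visits turns the
homotopy into the triviality of a word in a free group, hence into a cancelling pair of letters: up
to `ε` the loop is an excursion around a finite tree. Letting `ε → 0`, the loop factors through a
real tree coded by a contour function `h`. Weak normality of the two halves forces `h` to be
strictly monotone on each of them, so the unit-speed loop folds at the junction, contradicting the
maximality of the cancelled segment.
-/

open Filter Topology

/-! ### Lipschitz maps on the line -/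

section Lipschitz

variable {X : Type*} [PseudoMetricSpace X] {f g : ℝ → X} {K : NNReal} {m x y : ℝ}

theorem dist_le_sub_of_lipschitzWith_one (hf : LipschitzWith 1 f) (hxy : x ≤ y) :
    dist (f x) (f y) ≤ y - x := by
  simpa [Real.dist_eq, abs_of_nonpos (sub_nonpos.2 hxy)] using hf.dist_le_mul x y

theorem lipschitzWith_of_lipschitzOnWith_Iic_Ici (hl : LipschitzOnWith K f (Iic m))
    (hr : LipschitzOnWith K f (Ici m)) : LipschitzWith K f := by
  refine LipschitzWith.of_dist_le_mul fun x y => ?_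
  wlog hxy : x ≤ y generalizing x y
  · simpa only [dist_comm] using this y x (le_of_not_ge hxy)
  rcases le_total y m with hym | hmy
  · exact hl.dist_le_mul x (hxy.trans hym) y hym
  rcases le_total m x with hmx | hxm
  · exact hr.dist_le_mul x hmx y hmy
  calc dist (f x) (f y) ≤ dist (f x) (f m) + dist (f m) (f y) := dist_triangle _ _ _
    _ ≤ K * dist x m + K * dist m y :=
        add_le_add (hl.dist_le_mul x hxm m self_mem_Iic) (hr.dist_le_mul m self_mem_Ici y hmy)
    _ = K * dist x y := by
        rw [Real.dist_eq, Real.dist_eq, Real.dist_eq, abs_of_nonpos (sub_nonpos.2 hxm),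
          abs_of_nonpos (sub_nonpos.2 hmy), abs_of_nonpos (sub_nonpos.2 hxy)]
        ring

theorem exists_lipschitzWith_eqOn_Iic_eqOn_Ici (hf : LipschitzWith K f) (hg : LipschitzWith K g)
    (hfg : f m = g m) :
    ∃ F : ℝ → X, LipschitzWith K F ∧ EqOn F f (Iic m) ∧ EqOn F g (Ici m) := by
  let F : ℝ → X := fun x => if x ≤ m then f x else g x
  have hFf : EqOn F f (Iic m) := fun x hx => if_pos hx
  have hFg : EqOn F g (Ici m) := fun x (hx : m ≤ x) => by
    rcases hx.eq_or_lt with rfl | hlt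
    · exact (hFf self_mem_Iic).trans hfg
    · exact if_neg (not_le.2 hlt)
  refine ⟨F, lipschitzWith_of_lipschitzOnWith_Iic_Ici (m := m) ?_ ?_, hFf, hFg⟩
  · exact fun x hx y hy => by simpa only [hFf hx, hFf hy] using hf x y
  · exact fun x hx y hy => by simpa only [hFg hx, hFg hy] using hg x y

end Lipschitz

/-! ### Null-homotopic loops -/

section NullHomotopic

variable {X : Type*} [TopologicalSpace X] {f g : ℝ → X} {a b r u v : ℝ}

/-- The restriction of `f` to `[u, v]` contracts, relative to its endpoints, to the constant path
at `f u` inside its own image. -/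
def NullHomotopicOn (f : ℝ → X) (u v : ℝ) : Prop :=
  ∃ H : ℝ × ℝ → X, ContinuousOn H (Icc u v ×ˢ Icc 0 1) ∧
    (∀ t ∈ Icc u v, H (t, 0) = f t) ∧
    (∀ t ∈ Icc u v, H (t, 1) = f u) ∧
    (∀ s ∈ Icc (0 : ℝ) 1, H (u, s) = f u ∧ H (v, s) = f v) ∧
    (∀ p ∈ Icc u v ×ˢ Icc (0 : ℝ) 1, H p ∈ f '' Icc u v)

/-- Weak normality of `f` on `[a, b]`: no nontrivial closed subsegment is null-homotopic in its own
image. -/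
def WeaklyNormalOn (f : ℝ → X) (a b : ℝ) : Prop :=
  ∀ ⦃u v⦄, a ≤ u → u < v → v ≤ b → f u = f v → ¬NullHomotopicOn f u v

theorem NullHomotopicOn.congr (h : NullHomotopicOn f u v) (hfg : EqOn f g (Icc u v))
    (huv : u ≤ v) : NullHomotopicOn g u v := by
  obtain ⟨H, hH, h0, h1, hsides, himage⟩ := h
  rw [hfg.image_eq] at himage
  rw [hfg (left_mem_Icc.2 huv), hfg (right_mem_Icc.2 huv)] at hsides
  rw [hfg (left_mem_Icc.2 huv)] at h1
  exact ⟨H, hH, fun t ht => (h0 t ht).trans (hfg ht), h1, hsides, himage⟩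

theorem NullHomotopicOn.comp_const_sub (h : NullHomotopicOn f u v)
    (hloop : f u = f v) : NullHomotopicOn (fun t => f (r - t)) (r - v) (r - u) := by
  obtain ⟨H, hH, h0, h1, hsides, himage⟩ := h
  have hflip : MapsTo (fun p : ℝ × ℝ => (r - p.1, p.2)) (Icc (r - v) (r - u) ×ˢ Icc 0 1)
      (Icc u v ×ˢ Icc 0 1) := fun p hp =>
    ⟨⟨by linarith [hp.1.2], by linarith [hp.1.1]⟩, hp.2⟩
  have himage_flip : (fun t => f (r - t)) '' Icc (r - v) (r - u) = f '' Icc u v := by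
    rw [show (fun t => f (r - t)) = f ∘ fun t => r - t from rfl, image_comp,
      image_const_sub_Icc, sub_sub_cancel, sub_sub_cancel]
  refine ⟨fun p => H (r - p.1, p.2), hH.comp (by fun_prop) hflip, fun t ht => ?_,
    fun t ht => ?_, fun s hs => ?_, fun p hp => ?_⟩
  · exact h0 _ ⟨by linarith [ht.2], by linarith [ht.1]⟩
  · simpa only [sub_sub_cancel, ← hloop] using h1 (r - t) ⟨by linarith [ht.2], by linarith [ht.1]⟩
  · simpa only [sub_sub_cancel] using (hsides s hs).symm
  · simpa only [himage_flip] using himage _ (hflip hp)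

theorem WeaklyNormalOn.mono (h : WeaklyNormalOn f a b) (hau : a ≤ u) (hvb : v ≤ b) :
    WeaklyNormalOn f u v := fun _ _ hu huv hv => h (hau.trans hu) huv (hv.trans hvb)

theorem WeaklyNormalOn.congr (h : WeaklyNormalOn f a b) (hfg : EqOn f g (Icc a b)) :
    WeaklyNormalOn g a b := fun u v hu huv hv hloop hnull => by
  have hsub : Icc u v ⊆ Icc a b := Icc_subset_Icc hu hv
  have hgf : EqOn g f (Icc u v) := (hfg.mono hsub).symm
  refine h hu huv hv ?_ (hnull.congr hgf huv.le)
  rw [← hgf (left_mem_Icc.2 huv.le), ← hgf (right_mem_Icc.2 huv.le), hloop]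

theorem WeaklyNormalOn.comp_const_sub (h : WeaklyNormalOn f a b) :
    WeaklyNormalOn (fun t => f (r - t)) (r - b) (r - a) := fun u v hu huv hv hloop hnull => by
  refine h (u := r - v) (v := r - u) (by linarith) (by linarith) (by linarith) hloop.symm ?_
  simpa only [sub_sub_cancel] using hnull.comp_const_sub (r := r) hloop

theorem WeaklyNormalOn.comp_sub_const (h : WeaklyNormalOn f a b) :
    WeaklyNormalOn (fun t => f (t - r)) (a + r) (b + r) := by
  simpa [sub_eq_add_neg, add_comm] using (h.comp_const_sub (r := 0)).comp_const_sub (r := r)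

end NullHomotopic

/-! ### Contour functions of trees -/

section Contour

variable {X : Type*} [PseudoMetricSpace X] {f : ℝ → X} {h : ℝ → ℝ}
  {a b l l' m s t x x' y z z' α β ε : ℝ}

/-- `f` is, up to an error `ε`, a contraction of the real tree coded on `[a, b]` by the contour
function `h`: in that tree the points coded by `x ≤ y` are at distance
`h x + h y - 2 * min_{[x, y]} h`. -/
def IsContourOn (h : ℝ → ℝ) (f : ℝ → X) (ε a b : ℝ) : Prop :=
  ∀ ⦃x y⦄, a ≤ x → x ≤ y → y ≤ b → ∃ m ∈ Icc x y, dist (f x) (f y) ≤ h x + h y - 2 * h m + ε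

/-- In the tree with contour function `h`, the parameter `z` codes the ancestor at height `l` of the
point coded by `x`. -/
structure IsAncestorAt (h : ℝ → ℝ) (l x z : ℝ) : Prop where
  le : z ≤ x
  height_eq : h z = l
  le_height : ∀ y ∈ Icc z x, l ≤ h y

theorem IsAncestorAt.refl (h : ℝ → ℝ) (x : ℝ) : IsAncestorAt h (h x) x x :=
  ⟨le_rfl, rfl, fun _ hy => (congrArg h (le_antisymm hy.1 hy.2)).le⟩

theorem exists_isAncestorAt (hh : Continuous h) (hsx : s ≤ x) (hs : h s ≤ l) (hx : l ≤ h x) :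
    ∃ z, s ≤ z ∧ IsAncestorAt h l x z := by
  obtain ⟨z, ⟨hz, hzl⟩, hmax⟩ := (isCompact_Icc.inter_right (isClosed_Iic.preimage hh)
    |>.exists_isGreatest ⟨s, left_mem_Icc.2 hsx, hs⟩ : ∃ z, IsGreatest (Icc s x ∩ h ⁻¹' Iic l) z)
  obtain ⟨w, hw, rfl⟩ := intermediate_value_Icc hz.2 hh.continuousOn ⟨hzl, hx⟩
  obtain rfl : w = z :=
    le_antisymm (hmax ⟨⟨hz.1.trans hw.1, hw.2⟩, mem_preimage.2 self_mem_Iic⟩) hw.1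
  refine ⟨w, hz.1, hz.2, rfl, fun y hy => ?_⟩
  by_contra! hlt
  have hyw : y ≤ w := hmax ⟨⟨hz.1.trans hy.1, hy.2⟩, hlt.le⟩
  exact hlt.ne (congrArg h (le_antisymm hyw hy.1))

theorem IsAncestorAt.sub_le (hh : LipschitzWith 1 h) (hz : IsAncestorAt h l x z) (hzy : z ≤ y)
    (hyx' : y ≤ x') : l - |x - x'| ≤ h y := by
  rcases le_total y x with hyx | hxy
  · linarith [hz.le_height y ⟨hzy, hyx⟩, abs_nonneg (x - x')]
  · have hlx : l ≤ h x := hz.le_height x (right_mem_Icc.2 hz.le)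
    have hxy' := dist_le_sub_of_lipschitzWith_one hh hxy
    rw [Real.dist_eq] at hxy'
    linarith [le_abs_self (h x - h y), neg_abs_le (x - x')]

namespace IsContourOn

theorem mono (hf : IsContourOn h f ε a b) (has : a ≤ s) (htb : t ≤ b) : IsContourOn h f ε s t :=
  fun _ _ hx hxy hy => hf (has.trans hx) hxy (hy.trans htb)

theorem congr {g : ℝ → ℝ} (hf : IsContourOn h f ε a b) (hhg : EqOn h g (Icc a b)) :
    IsContourOn g f ε a b := fun x y hx hxy hy => by
  obtain ⟨m, hm, hdist⟩ := hf hx hxy hy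
  refine ⟨m, hm, ?_⟩
  rwa [← hhg ⟨hx, hxy.trans hy⟩, ← hhg ⟨hx.trans hxy, hy⟩, ← hhg ⟨hx.trans hm.1, hm.2.trans hy⟩]

theorem dist_le (hf : IsContourOn h f ε a b) (hx : a ≤ x) (hxy : x ≤ y) (hy : y ≤ b)
    (hl : ∀ z ∈ Icc x y, l ≤ h z) : dist (f x) (f y) ≤ h x + h y - 2 * l + ε := by
  obtain ⟨m, hm, hdist⟩ := hf hx hxy hy
  linarith [hl m hm]

theorem dist_ancestors_le (hf : IsContourOn h f 0 a b) (hh : LipschitzWith 1 h)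
    (hz : IsAncestorAt h l x z) (hz' : IsAncestorAt h l' x' z') (haz : a ≤ z) (haz' : a ≤ z')
    (hxb : x ≤ b) (hxb' : x' ≤ b) : dist (f z) (f z') ≤ |l - l'| + 2 * |x - x'| := by
  wlog hzz' : z ≤ z' generalizing l l' x x' z z'
  · rw [dist_comm, abs_sub_comm, abs_sub_comm x]
    exact this hz' hz haz' haz hxb' hxb (le_of_not_ge hzz')
  have hlow : ∀ y ∈ Icc z z', min l l' - |x - x'| ≤ h y := fun y hy =>
    (sub_le_sub_right (min_le_left _ _) _).trans (hz.sub_le hh hy.1 (hy.2.trans hz'.le))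
  have hdist := hf.dist_le haz hzz' (hz'.le.trans hxb') hlow
  rw [hz.height_eq, hz'.height_eq] at hdist
  linarith [max_sub_min_eq_abs l' l, min_add_max l' l, min_comm l l', max_comm l l']

end IsContourOn

end Contour

section Excursion

variable {X : Type*} [MetricSpace X] {f : ℝ → X} {h : ℝ → ℝ} {a b l s t x z z' : ℝ}

namespace IsContourOn

theorem eq_of_isAncestorAt (hf : IsContourOn h f 0 a b) (hh : LipschitzWith 1 h)
    (hz : IsAncestorAt h l x z) (hz' : IsAncestorAt h l x z') (haz : a ≤ z) (haz' : a ≤ z')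
    (hxb : x ≤ b) : f z = f z' :=
  dist_le_zero.1 (by simpa using hf.dist_ancestors_le hh hz hz' haz haz' hxb hxb)

theorem eq_of_excursion (hf : IsContourOn h f 0 s t) (hst : s ≤ t) (hends : h s = h t)
    (hmin : ∀ x ∈ Icc s t, h s ≤ h x) : f s = f t :=
  dist_le_zero.1 (by linarith [hf.dist_le le_rfl hst le_rfl hmin])

/-- The homotopy lets the point coded by `x` slide down the tree to its ancestor at height
`(1 - r) * h x + r * h s`. -/
theorem nullHomotopicOn_of_excursion (hf : IsContourOn h f 0 s t) (hh : LipschitzWith 1 h)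
    (hst : s ≤ t) (hends : h s = h t) (hmin : ∀ x ∈ Icc s t, h s ≤ h x) :
    NullHomotopicOn f s t := by
  let level (p : ℝ × ℝ) : ℝ := (1 - p.2) * h p.1 + p.2 * h s
  have hancestor : ∀ p ∈ Icc s t ×ˢ Icc (0 : ℝ) 1,
      ∃ z, s ≤ z ∧ IsAncestorAt h (level p) p.1 z := by
    rintro ⟨x, r⟩ ⟨hx, hr⟩
    have hsx := hmin x hx
    exact exists_isAncestorAt hh.continuous hx.1 (by dsimp only [level]; nlinarith [hr.2])
      (by dsimp only [level]; nlinarith [hr.1])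
  choose! σ hsσ hσ using hancestor
  have hsides : ∀ r ∈ Icc (0 : ℝ) 1, (s, r) ∈ Icc s t ×ˢ Icc (0 : ℝ) 1 ∧
      (t, r) ∈ Icc s t ×ˢ Icc (0 : ℝ) 1 := fun r hr =>
    ⟨⟨left_mem_Icc.2 hst, hr⟩, right_mem_Icc.2 hst, hr⟩
  refine ⟨fun p => f (σ p), fun p hp => ?_, fun x hx => ?_, fun x hx => ?_,
    fun r hr => ⟨?_, ?_⟩, fun p hp => ?_⟩
  · have hbound : Continuous fun q : ℝ × ℝ => |level q - level p| + 2 * |q.1 - p.1| := by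
      have := hh.continuous
      fun_prop
    refine tendsto_iff_dist_tendsto_zero.2 (squeeze_zero' (.of_forall fun _ => dist_nonneg)
      ?_ (by simpa using hbound.continuousWithinAt.tendsto (x := p)))
    filter_upwards [self_mem_nhdsWithin] with q hq
    exact hf.dist_ancestors_le hh (hσ q hq) (hσ p hp) (hsσ q hq) (hsσ p hp) hq.1.2 hp.1.2
  · have hp : (x, (0 : ℝ)) ∈ Icc s t ×ˢ Icc (0 : ℝ) 1 := ⟨hx, unitInterval.zero_mem⟩
    have hlevel : level (x, 0) = h x := by simp [level]
    exact hf.eq_of_isAncestorAt hh (hlevel ▸ hσ _ hp) (.refl h x) (hsσ _ hp) hx.1 hx.2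
  · have hp : (x, (1 : ℝ)) ∈ Icc s t ×ˢ Icc (0 : ℝ) 1 := ⟨hx, unitInterval.one_mem⟩
    have hlevel : level (x, 1) = h s := by simp [level]
    have hs : IsAncestorAt h (h s) x s := ⟨hx.1, rfl, fun y hy => hmin y ⟨hy.1, hy.2.trans hx.2⟩⟩
    exact hf.eq_of_isAncestorAt hh (hlevel ▸ hσ _ hp) hs (hsσ _ hp) le_rfl hx.2
  · exact congrArg f (le_antisymm (hσ _ (hsides r hr).1).le (hsσ _ (hsides r hr).1))
  · have hlevel : level (t, r) = h t := by simp only [level, hends]; ring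
    exact hf.eq_of_isAncestorAt hh (hlevel ▸ hσ _ (hsides r hr).2) (.refl h t)
      (hsσ _ (hsides r hr).2) hst le_rfl
  · exact ⟨σ p, ⟨hsσ p hp, (hσ p hp).le.trans hp.1.2⟩, rfl⟩

end IsContourOn

end Excursion

/-! ### Thin subdivisions -/

section Thin

variable {X : Type*} [PseudoMetricSpace X] {f : ℝ → X} {g h : ℝ → ℝ} {a b m x α β ε : ℝ}

/-- The interval `[s, t]` can be cut into intervals of length at most `ε` along a binary tree of
subintervals each of which has its endpoints mapped to within `ε` by `f`. -/
inductive Thin (f : ℝ → X) (ε : ℝ) : ℝ → ℝ → Prop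
  | leaf {s t : ℝ} : s ≤ t → t - s ≤ ε → Thin f ε s t
  | node {s m t : ℝ} : Thin f ε s m → Thin f ε m t → dist (f s) (f t) ≤ ε → Thin f ε s t

theorem Thin.le (h : Thin f ε a b) : a ≤ b := by
  induction h with
  | leaf hst _ => exact hst
  | node _ _ _ hsm hmt => exact hsm.trans hmt

theorem Thin.dist_le (hf : LipschitzWith 1 f) (h : Thin f ε a b) : dist (f a) (f b) ≤ ε := by
  cases h with
  | leaf hab hε => exact (dist_le_sub_of_lipschitzWith_one hf hab).trans hε
  | node _ _ hε => exact hε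

/-- `h` is a contour function for `f` on `[a, b]` with error `4 * ε` that stays above the distance
to one of the endpoints. -/
structure IsSpanningContour (h : ℝ → ℝ) (f : ℝ → X) (ε a b : ℝ) : Prop where
  isContourOn : IsContourOn h f (4 * ε) a b
  height_ge : ∀ x ∈ Icc a b, h a + dist (f a) (f x) ≤ h x ∨ h b + dist (f b) (f x) ≤ h x

theorem IsSpanningContour.congr (hh : IsSpanningContour h f ε a b) (hab : a ≤ b)
    (hhg : EqOn h g (Icc a b)) : IsSpanningContour g f ε a b := by
  refine ⟨hh.isContourOn.congr hhg, fun x hx => ?_⟩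
  rw [← hhg (left_mem_Icc.2 hab), ← hhg (right_mem_Icc.2 hab), ← hhg hx]
  exact hh.height_ge x hx

theorem IsSpanningContour.sub_dist_le (hh : IsSpanningContour h f ε a b)
    (hε : dist (f a) (f b) ≤ ε) (hends : |h a - h b| ≤ dist (f a) (f b)) (hx : x ∈ Icc a b) :
    dist (f x) (f a) ≤ h x - h a + 2 * ε ∧ dist (f x) (f b) ≤ h x - h b + 2 * ε := by
  have hab := abs_le.1 hends
  have hxa := dist_triangle_right (f x) (f a) (f b)
  have hxb := dist_triangle_right (f x) (f b) (f a)
  rw [dist_comm (f b) (f a)] at hxb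
  rcases hh.height_ge x hx with hge | hge <;> rw [dist_comm] at hge <;> constructor <;> linarith

theorem IsSpanningContour.trans (hl : IsSpanningContour h f ε a m)
    (hr : IsSpanningContour h f ε m b) (hlε : dist (f a) (f m) ≤ ε) (hrε : dist (f m) (f b) ≤ ε)
    (hlm : |h a - h m| ≤ dist (f a) (f m)) (hrm : |h m - h b| ≤ dist (f m) (f b))
    (hm : h m = h a + dist (f a) (f m) ∨ h m = h b + dist (f b) (f m)) :
    IsSpanningContour h f ε a b := by
  refine ⟨fun x y hx hxy hy => ?_, fun x hx => ?_⟩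
  · rcases le_total y m with hym | hmy
    · exact hl.isContourOn hx hxy hym
    rcases le_total m x with hmx | hxm
    · exact hr.isContourOn hmx hxy hy
    have hxm' := (hl.sub_dist_le hlε hlm ⟨hx, hxm⟩).2
    have hym' := (hr.sub_dist_le hrε hrm ⟨hmy, hy⟩).1
    exact ⟨m, ⟨hxm, hmy⟩, by linarith [dist_triangle_right (f x) (f y) (f m)]⟩
  · have hthrough : h m + dist (f m) (f x) ≤ h x →
        h a + dist (f a) (f x) ≤ h x ∨ h b + dist (f b) (f x) ≤ h x := fun hge =>
      hm.imp (fun hma => by linarith [dist_triangle (f a) (f m) (f x)])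
        (fun hmb => by linarith [dist_triangle (f b) (f m) (f x)])
    rcases le_total x m with hxm | hmx
    · exact (hl.height_ge x ⟨hx.1, hxm⟩).elim Or.inl hthrough
    · exact (hr.height_ge x ⟨hmx, hx.2⟩).elim hthrough Or.inr

theorem lipschitzWith_tent :
    LipschitzWith 1 fun x : ℝ => min (α + (x - a)) (β + (b - x)) := by
  have hup : LipschitzWith 1 fun x : ℝ => α + (x - a) := .of_dist_le_mul fun x y => by simp
  have hdown : LipschitzWith 1 fun x : ℝ => β + (b - x) :=
    .of_dist_le_mul fun x y => by rw [dist_add_left, dist_sub_left, NNReal.coe_one, one_mul]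
  simpa only [max_self] using hup.min hdown

theorem isSpanningContour_tent (hf : LipschitzWith 1 f) (hε : b - a ≤ ε)
    (hαβ : |α - β| ≤ b - a) :
    IsSpanningContour (fun x => min (α + (x - a)) (β + (b - x))) f ε a b := by
  have hαβ' := abs_le.1 hαβ
  have ha : min (α + (a - a)) (β + (b - a)) = α := by rw [min_eq_left] <;> linarith
  have hb : min (α + (b - a)) (β + (b - b)) = β := by rw [min_eq_right] <;> linarith
  refine ⟨fun x y hx hxy hy => ⟨x, left_mem_Icc.2 hxy, ?_⟩, fun x hx => ?_⟩
  · have hdist := dist_le_sub_of_lipschitzWith_one hf hxy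
    have hmin : min (α + (x - a)) (β + (b - x)) - (y - x) ≤ min (α + (y - a)) (β + (b - y)) :=
      le_min (by linarith [min_le_left (α + (x - a)) (β + (b - x))])
        (by linarith [min_le_right (α + (x - a)) (β + (b - x))])
    linarith
  · rw [ha, hb]
    have hax := dist_le_sub_of_lipschitzWith_one hf hx.1
    have hxb := dist_le_sub_of_lipschitzWith_one hf hx.2
    rw [dist_comm (f x)] at hxb
    rcases min_choice (α + (x - a)) (β + (b - x)) with hmin | hmin
    · exact .inl (by linarith)
    · exact .inr (by linarith)

theorem Thin.exists_isSpanningContour (hf : LipschitzWith 1 f) (h : Thin f ε a b) :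
    ∀ α β, |α - β| ≤ dist (f a) (f b) →
      ∃ h : ℝ → ℝ, LipschitzWith 1 h ∧ h a = α ∧ h b = β ∧ IsSpanningContour h f ε a b := by
  induction h with
  | @leaf a b hab hε =>
    intro α β hαβ
    replace hαβ := hαβ.trans (dist_le_sub_of_lipschitzWith_one hf hab)
    have hαβ' := abs_le.1 hαβ
    refine ⟨fun x => min (α + (x - a)) (β + (b - x)), lipschitzWith_tent, ?_, ?_,
      isSpanningContour_tent hf hε hαβ⟩
    · exact (min_eq_left (by linarith)).trans (by ring)
    · exact (min_eq_right (by linarith)).trans (by ring)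
  | @node a m b hl hr _ ihl ihr =>
    intro α β hαβ
    have hαβ' := abs_le.1 hαβ
    have hbm := dist_comm (f b) (f m)
    obtain ⟨μ, hμ⟩ : ∃ μ, μ = min (α + dist (f a) (f m)) (β + dist (f b) (f m)) := ⟨_, rfl⟩
    have hμα : μ ≤ α + dist (f a) (f m) := hμ.trans_le (min_le_left _ _)
    have hμβ : μ ≤ β + dist (f b) (f m) := hμ.trans_le (min_le_right _ _)
    have hμc : μ = α + dist (f a) (f m) ∨ μ = β + dist (f b) (f m) := hμ ▸ min_choice _ _
    have hαμ : |α - μ| ≤ dist (f a) (f m) := abs_le.2 (by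
      constructor <;> rcases hμc with hμc | hμc <;>
        linarith [dist_triangle_right (f a) (f b) (f m), dist_nonneg (x := f a) (y := f m)])
    have hμβ' : |μ - β| ≤ dist (f m) (f b) := abs_le.2 (by
      constructor <;> rcases hμc with hμc | hμc <;>
        linarith [dist_triangle_right (f a) (f b) (f m), dist_nonneg (x := f m) (y := f b)])
    obtain ⟨g₁, hg₁, rfl, hg₁m, hspan₁⟩ := ihl α μ hαμ
    obtain ⟨g₂, hg₂, hg₂m, rfl, hspan₂⟩ := ihr μ β hμβ'
    obtain ⟨h, hh, hhg₁, hhg₂⟩ :=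
      exists_lipschitzWith_eqOn_Iic_eqOn_Ici hg₁ hg₂ (hg₁m.trans hg₂m.symm)
    have ha := hhg₁ hl.le
    have hb := hhg₂ hr.le
    have hm : h m = μ := (hhg₁ self_mem_Iic).trans hg₁m
    refine ⟨h, hh, ha, hb, ?_⟩
    rw [← ha, ← hm] at hαμ
    rw [← hb, ← hm] at hμβ'
    rw [← ha, ← hb, ← hm] at hμc
    exact (hspan₁.congr hl.le (hhg₁.symm.mono Icc_subset_Iic_self)).trans
      (hspan₂.congr hr.le (hhg₂.symm.mono Icc_subset_Ici_self)) (hl.dist_le hf) (hr.dist_le hf)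
      hαμ hμβ' hμc

theorem exists_tendsto_ultrafilter {ι Y : Type*} [TopologicalSpace Y] {K : Set Y}
    (hK : IsCompact K) (U : Ultrafilter ι) {u : ι → Y} (hu : ∀ i, u i ∈ K) :
    ∃ l ∈ K, Tendsto u U (𝓝 l) :=
  isCompact_iff_ultrafilter_le_nhds.1 hK (U.map u)
    (le_principal_iff.2 (mem_map.2 (Eventually.of_forall hu)))

theorem exists_lipschitzWith_one_tendsto_ultrafilter {ι : Type*} (U : Ultrafilter ι)
    {g : ι → ℝ → ℝ} (hg : ∀ i, LipschitzWith 1 (g i)) (ha : ∀ i, g i a = 0) :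
    ∃ h : ℝ → ℝ, LipschitzWith 1 h ∧ ∀ x, Tendsto (fun i => g i x) U (𝓝 (h x)) := by
  have hball : ∀ x i, g i x ∈ Metric.closedBall 0 (dist x a) := fun x i => by
    simpa [ha] using (hg i).dist_le_mul x a
  choose h _ hlim using fun x =>
    exists_tendsto_ultrafilter (isCompact_closedBall _ _) U (hball x)
  exact ⟨h, .of_dist_le_mul fun x y => le_of_tendsto ((hlim x).dist (hlim y))
    (.of_forall fun i => (hg i).dist_le_mul x y), hlim⟩

theorem isContourOn_of_tendsto {ι : Type*} {U : Ultrafilter ι} {g : ι → ℝ → ℝ} {e : ι → ℝ}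
    (hg : ∀ i, LipschitzWith 1 (g i)) (hlim : ∀ x, Tendsto (fun i => g i x) U (𝓝 (h x)))
    (he : Tendsto e U (𝓝 ε)) (hcontour : ∀ i, IsContourOn (g i) f (e i) a b) :
    IsContourOn h f ε a b := by
  intro x y hx hxy hy
  choose m hm hdist using fun i => hcontour i hx hxy hy
  obtain ⟨l, hl, hml⟩ := exists_tendsto_ultrafilter isCompact_Icc U hm
  have hgm : Tendsto (fun i => g i (m i)) U (𝓝 (h l)) := by
    refine tendsto_of_tendsto_of_dist (hlim l) (squeeze_zero (fun _ => dist_nonneg)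
      (fun i => ?_) (by simpa using (tendsto_const_nhds (x := l)).dist hml))
    simpa using (hg i).dist_le_mul l (m i)
  exact ⟨l, hl, ge_of_tendsto ((((hlim x).add (hlim y)).sub (hgm.const_mul 2)).add he)
    (.of_forall hdist)⟩

theorem exists_isContourOn_of_forall_thin (hf : LipschitzWith 1 f) (hloop : f a = f b)
    (hthin : ∀ ε > 0, Thin f ε a b) :
    ∃ h : ℝ → ℝ, LipschitzWith 1 h ∧ h a = 0 ∧ h b = 0 ∧ (∀ x ∈ Icc a b, 0 ≤ h x) ∧
      IsContourOn h f 0 a b := by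
  choose g hg hga hgb hspan using fun n : ℕ =>
    (hthin (1 / ((n : ℝ) + 1)) Nat.one_div_pos_of_nat).exists_isSpanningContour hf 0 0
      (by simp [hloop])
  obtain ⟨h, hh, hlim⟩ := exists_lipschitzWith_one_tendsto_ultrafilter (hyperfilter ℕ) hg hga
  have hε : Tendsto (fun n : ℕ => 4 * (1 / ((n : ℝ) + 1))) (hyperfilter ℕ) (𝓝 0) := by
    simpa using (tendsto_one_div_add_atTop_nhds_zero_nat (𝕜 := ℝ)).const_mul 4
      |>.mono_left Nat.hyperfilter_le_atTop
  refine ⟨h, hh, tendsto_nhds_unique (hlim a) (by simp [hga]),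
    tendsto_nhds_unique (hlim b) (by simp [hgb]), fun x hx => ge_of_tendsto (hlim x)
    (.of_forall fun n => ?_), isContourOn_of_tendsto hg hlim hε fun n => (hspan n).isContourOn⟩
  rcases (hspan n).height_ge x hx with hge | hge
  · exact (add_nonneg (hga n).ge dist_nonneg).trans hge
  · exact (add_nonneg (hgb n).ge dist_nonneg).trans hge

end Thin

/-! ### Levels of Lipschitz functions -/

section Levels

open MeasureTheory

variable {g : ℝ → ℝ} {K : NNReal} {s : Set ℝ}

theorem volume_image_eq_zero_of_lipschitzWith (hg : LipschitzWith K g) (hs : volume s = 0) :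
    volume (g '' s) = 0 := by
  rw [← hausdorffMeasure_real] at hs ⊢
  refine le_antisymm ((hg.hausdorffMeasure_image_le zero_le_one s).trans ?_) zero_le
  rw [hs, mul_zero]

theorem volume_image_deriv_eq_zero (g : ℝ → ℝ) :
    volume (g '' {t | DifferentiableAt ℝ g t ∧ deriv g t = 0}) = 0 := by
  refine addHaar_image_eq_zero_of_det_fderivWithin_eq_zero volume (f' := fun _ => 0)
    (fun t ht => ?_) fun _ _ => by simp [ContinuousLinearMap.det]
  simpa [ht.2] using ht.1.hasDerivAt.hasFDerivAt.hasFDerivWithinAt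

theorem finite_inter_preimage_of_deriv_ne_zero (hg : Continuous g) (hs : IsCompact s) {r : ℝ}
    (hr : ∀ t, g t = r → DifferentiableAt ℝ g t ∧ deriv g t ≠ 0) :
    (s ∩ g ⁻¹' {r}).Finite := by
  refine (hs.inter_right (isClosed_singleton.preimage hg)).finite
    (isDiscrete_iff_nhdsNE.2 fun t ht => ?_)
  obtain ⟨hdiff, hderiv⟩ := hr t ht.2
  rw [inf_principal_eq_bot]
  filter_upwards [hdiff.hasDerivAt.eventually_ne (c := r) hderiv] with u hu using fun h => hu h.2

theorem ae_finite_inter_preimage (hg : LipschitzWith K g) (hs : IsCompact s) :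
    ∀ᵐ r, (s ∩ g ⁻¹' {r}).Finite := by
  have hnondiff : volume (g '' {t | ¬DifferentiableAt ℝ g t}) = 0 :=
    volume_image_eq_zero_of_lipschitzWith hg hg.ae_differentiableAt_real
  filter_upwards [measure_eq_zero_iff_ae_notMem.1 hnondiff,
    measure_eq_zero_iff_ae_notMem.1 (volume_image_deriv_eq_zero g)] with r hr hr'
  refine finite_inter_preimage_of_deriv_ne_zero hg.continuous hs fun t ht => ?_
  have hdiff : DifferentiableAt ℝ g t := by_contra fun h => hr ⟨t, h, ht⟩
  exact ⟨hdiff, fun h => hr' ⟨t, ⟨hdiff, h⟩, ht⟩⟩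

theorem exists_mem_Ioo_finite_inter_preimage (hg : LipschitzWith K g) (hs : IsCompact s)
    {a b : ℝ} (hab : a < b) : ∃ r ∈ Ioo a b, (s ∩ g ⁻¹' {r}).Finite := by
  have hpos : volume (Ioo a b) ≠ 0 := by simpa using hab
  simpa only [and_comm] using
    ((ae_finite_inter_preimage hg hs).and_frequently (frequently_ae_mem_iff.2 hpos)).exists

end Levels

/-! ### Decompositions along finitely many cut points -/

section CutDecomposition

variable {X : Type*} [MetricSpace X] {f : ℝ → X} {K : NNReal} {Y : Set X} {a b ε : ℝ}

theorem exists_finset_cover_balls_finite_spheres (hf : LipschitzWith K f) (a b : ℝ) (hε : 0 < ε) :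
    ∃ (t : Finset X) (r : X → ℝ), (∀ y, r y < ε) ∧ f '' Icc a b ⊆ ⋃ y ∈ t, Metric.ball y (r y) ∧
      ∀ y, (f '' Icc a b ∩ Metric.sphere y (r y)).Finite := by
  choose r hr hfin using fun y : X => exists_mem_Ioo_finite_inter_preimage
    ((LipschitzWith.dist_left y).comp hf) (isCompact_Icc (a := a) (b := b)) hε
  obtain ⟨t, -, ht⟩ := (isCompact_Icc.image hf.continuous).elim_nhds_subcover
    (fun y => Metric.ball y (r y)) fun y _ => Metric.ball_mem_nhds y (hr y).1
  refine ⟨t, r, fun y => (hr y).2, ht, fun y => ((hfin y).image f).subset ?_⟩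
  rintro _ ⟨⟨u, hu, rfl⟩, hsphere⟩
  exact ⟨u, ⟨hu, hsphere⟩, rfl⟩

/-- The centres in `t` whose ball contains `x`. The cells cut out by the spheres of radius `r y`
about `y ∈ t` are distinguished by their signature. -/
def signature (t : Finset X) (r : X → ℝ) (x : X) : Set X := {y | y ∈ t ∧ dist x y < r y}

theorem eventually_signature_eq {t : Finset X} {r : X → ℝ} {x : X}
    (hx : ∀ y ∈ t, dist x y ≠ r y) :
    ∀ᶠ z in 𝓝 x, (∀ y ∈ t, dist z y ≠ r y) ∧ signature t r z = signature t r x := by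
  have hside : ∀ᶠ z in 𝓝 x, ∀ y ∈ t, dist z y ≠ r y ∧ (dist z y < r y ↔ dist x y < r y) := by
    rw [eventually_all_finset]
    intro y hy
    have hcont : Tendsto (fun z => dist z y) (𝓝 x) (𝓝 (dist x y)) :=
      (continuous_id.dist continuous_const).tendsto x
    rcases lt_or_gt_of_ne (hx y hy) with hlt | hgt
    · filter_upwards [hcont.eventually_lt_const hlt] with z hz
      exact ⟨hz.ne, iff_of_true hz hlt⟩
    · filter_upwards [hcont.eventually_const_lt hgt] with z hz
      exact ⟨hz.ne', iff_of_false hz.not_gt hgt.not_gt⟩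
  filter_upwards [hside] with z hz
  exact ⟨fun y hy => (hz y hy).1, Set.ext fun y => and_congr_right fun hy => (hz y hy).2⟩

theorem dist_le_of_signature_eq {t : Finset X} {r : X → ℝ} (hr : ∀ y, r y < ε / 2) {x z : X}
    (hx : x ∈ ⋃ y ∈ t, Metric.ball y (r y)) (hxz : signature t r x = signature t r z) :
    dist x z ≤ ε := by
  simp only [mem_iUnion, exists_prop] at hx
  obtain ⟨y, hy⟩ := hx
  have hzy : y ∈ signature t r z := hxz ▸ hy
  linarith [hr y, dist_triangle_right x z y, Metric.mem_ball.1 hy.2, hzy.2]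

theorem eventually_two_mul_lt_dist_of_finite {P : Set X} (hP : P.Finite) :
    ∀ᶠ ρ : ℝ in 𝓝 0, ∀ p ∈ P, ∀ q ∈ P, p ≠ q → 2 * ρ < dist p q := by
  simp only [eventually_all_finite hP, eventually_imp_distrib_left]
  intro p _ q _ hpq
  have hlim : Tendsto (fun ρ : ℝ => 2 * ρ) (𝓝 0) (𝓝 0) :=
    (continuous_const_mul 2).tendsto' 0 0 (mul_zero 2)
  exact hlim.eventually_lt_const (dist_pos.2 hpq)

/-- A decomposition of `Y` into cells of diameter at most `ε` that meet only at the points of `cut`,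
together with disjoint small balls about these points; cells are recorded by the values of `cell`,
and `lebesgue` is a Lebesgue number of the resulting cover. -/
structure CutDecomposition (Y : Set X) (ε : ℝ) where
  cut : Set X
  cell : X → Set X
  radius : ℝ
  lebesgue : ℝ
  radius_pos : 0 < radius
  two_mul_radius_le : 2 * radius ≤ ε
  lebesgue_pos : 0 < lebesgue
  eq_of_dist_lt : ∀ p ∈ cut, ∀ q ∈ cut, ∀ x, dist x p < radius → dist x q < radius → p = q
  dist_le_of_cell_eq : ∀ x ∈ Y, ∀ y ∈ Y, cell x = cell y → dist x y ≤ ε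
  near_cut_or_cell : ∀ x ∈ Y,
    (∃ p ∈ cut, ∀ y ∈ Y, dist y x < lebesgue → dist y p < radius) ∨
      ∃ σ, ∀ y ∈ Y, dist y x < lebesgue → y ∉ cut ∧ cell y = σ

theorem exists_lebesgue_of_isolated_cut {P : Set X} {c : X → Set X} {ρ : ℝ} (hY : IsCompact Y)
    (hρ : 0 < ρ) (hc : ∀ x ∈ Y, x ∉ P → ∀ᶠ y in 𝓝[Y] x, y ∉ P ∧ c y = c x) :
    ∃ η > 0, ∀ x ∈ Y, (∃ p ∈ P, ∀ y ∈ Y, dist y x < η → dist y p < ρ) ∨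
      ∃ σ, ∀ y ∈ Y, dist y x < η → y ∉ P ∧ c y = σ := by
  have hnhds : ∀ x ∈ Y, {y | x ∈ P ∧ dist y x < ρ ∨ x ∉ P ∧ y ∉ P ∧ c y = c x} ∈ 𝓝[Y] x := by
    intro x hx
    by_cases hxP : x ∈ P
    · filter_upwards [nhdsWithin_le_nhds (Metric.ball_mem_nhds x hρ)] with y hy
      exact .inl ⟨hxP, hy⟩
    · filter_upwards [hc x hx hxP] with y hy using .inr ⟨hxP, hy⟩
  obtain ⟨η, hη, hleb⟩ := Metric.uniformity_basis_dist.lebesgue_number_lemma_nhdsWithin hY hnhds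
  refine ⟨η, hη, fun x hx => ?_⟩
  obtain ⟨z, hz⟩ := hleb x hx
  have hmem : ∀ y ∈ Y, dist y x < η → z ∈ P ∧ dist y z < ρ ∨ z ∉ P ∧ y ∉ P ∧ c y = c z :=
    fun y hy hyx => hz ⟨by simpa [UniformSpace.ball, dist_comm] using hyx, hy⟩
  by_cases hzP : z ∈ P
  · exact .inl ⟨z, hzP, fun y hy hyx => by simpa [hzP] using hmem y hy hyx⟩
  · exact .inr ⟨c z, fun y hy hyx => by simpa [hzP] using hmem y hy hyx⟩

theorem nonempty_cutDecomposition (hf : LipschitzWith K f) (a b : ℝ) (hε : 0 < ε) :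
    Nonempty (CutDecomposition (f '' Icc a b) ε) := by
  obtain ⟨t, r, hr, hcover, hfin⟩ := exists_finset_cover_balls_finite_spheres hf a b (half_pos hε)
  let P : Set X := ⋃ y ∈ t, f '' Icc a b ∩ Metric.sphere y (r y)
  have hP : P.Finite := t.finite_toSet.biUnion fun y _ => hfin y
  have hnotMem : ∀ x ∈ f '' Icc a b, x ∉ P ↔ ∀ y ∈ t, dist x y ≠ r y := fun x hx => by
    simp only [P, mem_iUnion, mem_inter_iff, hx, true_and, Metric.mem_sphere, exists_prop,
      not_exists, not_and, ne_eq]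
  obtain ⟨ρ, ⟨hsep, hρε⟩, hρ⟩ := (((eventually_two_mul_lt_dist_of_finite hP).and
    (eventually_lt_nhds (half_pos hε))).filter_mono nhdsWithin_le_nhds |>.and
      (self_mem_nhdsWithin (s := Ioi (0 : ℝ)))).exists
  obtain ⟨η, hη, hlocal⟩ := exists_lebesgue_of_isolated_cut (P := P) (c := signature t r)
    (isCompact_Icc.image hf.continuous) hρ fun x hx hxP => by
      filter_upwards [self_mem_nhdsWithin, nhdsWithin_le_nhds
        (eventually_signature_eq ((hnotMem x hx).1 hxP))] with y hy hyx
      exact ⟨(hnotMem y hy).2 hyx.1, hyx.2⟩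
  exact ⟨{
    cut := P
    cell := signature t r
    radius := ρ
    lebesgue := η
    radius_pos := hρ
    two_mul_radius_le := by linarith
    lebesgue_pos := hη
    eq_of_dist_lt := fun p hp q hq x hxp hxq => by
      by_contra hpq
      linarith [hsep p hp q hq hpq, dist_triangle_left p q x]
    dist_le_of_cell_eq := fun x hx y _ => dist_le_of_signature_eq hr (hcover hx)
    near_cut_or_cell := hlocal }⟩

end CutDecomposition

/-! ### Reduction of words along walks in a bipartite graph -/

section Words

variable {A B α : Type*} {R : α → α → Prop} {label : α → A ⊕ B}

/-- The letter carried by an oriented edge of the complete bipartite graph on `A ⊕ B`: the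
generator `(p, σ)` from `p` to `σ`, its inverse from `σ` to `p`, and no letter for pairs of vertices
on the same side. -/
def edgeWord : A ⊕ B → A ⊕ B → List ((A × B) × Bool)
  | .inl p, .inr σ => [((p, σ), true)]
  | .inr σ, .inl p => [((p, σ), false)]
  | .inl _, .inl _ => []
  | .inr _, .inr _ => []

/-- The word read along the walk through a list of vertices. -/
def walkWord : List (A ⊕ B) → List ((A × B) × Bool)
  | q :: r :: l => edgeWord q r ++ walkWord (r :: l)
  | _ => []

/-- Walks of length at least two along edges of the complete bipartite graph that never return
along the edge just taken. Nothing is required of shorter walks. -/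
def NonBacktracking : List (A ⊕ B) → Prop
  | p :: q :: r :: l =>
    (completeBipartiteGraph A B).Adj p q ∧ (completeBipartiteGraph A B).Adj q r ∧
      p ≠ r ∧ NonBacktracking (q :: r :: l)
  | _ => True

theorem mk_edgeWord_self (q : A ⊕ B) : FreeGroup.mk (edgeWord q q) = 1 := by
  rcases q with p | σ <;> rfl

theorem mk_edgeWord_mul_swap (q r : A ⊕ B) :
    FreeGroup.mk (edgeWord q r) * FreeGroup.mk (edgeWord r q) = 1 := by
  have hinv : FreeGroup.mk (edgeWord r q) = (FreeGroup.mk (edgeWord q r))⁻¹ := by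
    rcases q with p | σ <;> rcases r with p' | σ' <;> rfl
  rw [hinv, mul_inv_cancel]

theorem mk_edgeWord_mul_of_eq {p q r : A ⊕ B} (h : p = q ∨ q = r ∨ p = r) :
    FreeGroup.mk (edgeWord p q) * FreeGroup.mk (edgeWord q r) = FreeGroup.mk (edgeWord p r) := by
  rcases h with rfl | rfl | rfl
  · rw [mk_edgeWord_self, one_mul]
  · rw [mk_edgeWord_self, mul_one]
  · rw [mk_edgeWord_mul_swap, mk_edgeWord_self]

theorem NonBacktracking.isReduced_walkWord :
    ∀ {l : List (A ⊕ B)}, NonBacktracking l → FreeGroup.IsReduced (walkWord l)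
  | [], _ | [_], _ => by simp [walkWord]
  | [q, r], _ => by rcases q with p | σ <;> rcases r with p' | σ' <;> simp [walkWord, edgeWord]
  | p :: q :: r :: l, h => by
    have ih := isReduced_walkWord h.2.2.2
    rcases p with p | σ <;> rcases q with p' | σ' <;> rcases r with p'' | σ'' <;>
      simp_all [NonBacktracking, walkWord, edgeWord]

theorem NonBacktracking.mk_walkWord_ne_one {p q r : A ⊕ B} {l : List (A ⊕ B)}
    (h : NonBacktracking (p :: q :: r :: l)) : FreeGroup.mk (walkWord (p :: q :: r :: l)) ≠ 1 := by
  classical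
  intro hone
  have hnil : walkWord (p :: q :: r :: l) = [] := by
    rw [← h.isReduced_walkWord.reduce_eq, FreeGroup.reduce.sound hone, FreeGroup.reduce_nil]
  rcases p with p | σ <;> rcases q with p' | σ' <;>
    simp_all [NonBacktracking, walkWord, edgeWord]

theorem nonBacktracking_or_exists_shorter
    (hadj : ∀ a b, R a b → label a = label b ∨ (completeBipartiteGraph A B).Adj (label a) (label b))
    (hshortcut : ∀ a b c, R a b → R b c →
      label a = label b ∨ label b = label c ∨ label a = label c → R a c) :
    ∀ (a b : α) (l : List α), (a :: b :: l).IsChain R →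
      NonBacktracking ((a :: b :: l).map label) ∨
        ∃ c l', List.length l' < l.length ∧ (a :: c :: l').IsChain R ∧
          l'.getLastD c = l.getLastD b ∧ FreeGroup.mk (walkWord ((a :: c :: l').map label)) =
            FreeGroup.mk (walkWord ((a :: b :: l).map label))
  | _, _, [], _ => .inl trivial
  | a, b, c :: l, h => by
    obtain ⟨hab, hbl⟩ := List.isChain_cons_cons.1 h
    obtain ⟨hbc, hcl⟩ := List.isChain_cons_cons.1 hbl
    by_cases heq : label a = label b ∨ label b = label c ∨ label a = label c
    · refine .inr ⟨c, l, by simp, List.isChain_cons_cons.2 ⟨hshortcut a b c hab hbc heq, hcl⟩,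
        List.getLastD_cons .. |>.symm, ?_⟩
      simp only [List.map_cons, walkWord, ← FreeGroup.mul_mk]
      rw [← mul_assoc, mk_edgeWord_mul_of_eq heq]
    · push Not at heq
      obtain hirr | ⟨d, l', hlen, hchain, hlast, hword⟩ :=
        nonBacktracking_or_exists_shorter hadj hshortcut b c l hbl
      · exact .inl ⟨(hadj a b hab).resolve_left heq.1, (hadj b c hbc).resolve_left heq.2.1,
          heq.2.2, hirr⟩
      · refine .inr ⟨b, d :: l', by simpa using hlen, List.isChain_cons_cons.2 ⟨hab, hchain⟩,
          by simpa only [List.getLastD_cons] using hlast, ?_⟩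
        simp only [List.map_cons, walkWord, ← FreeGroup.mul_mk] at hword ⊢
        rw [hword]

theorem rel_getLastD_of_mk_walkWord_eq_one
    (hadj : ∀ a b, R a b → label a = label b ∨ (completeBipartiteGraph A B).Adj (label a) (label b))
    (hshortcut : ∀ a b c, R a b → R b c →
      label a = label b ∨ label b = label c ∨ label a = label c → R a c)
    (a b : α) (l : List α) (hchain : (a :: b :: l).IsChain R)
    (hword : FreeGroup.mk (walkWord ((a :: b :: l).map label)) = 1) : R a (l.getLastD b) := by
  induction hn : l.length using Nat.strong_induction_on generalizing b l with
  | _ n ih =>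
    subst hn
    obtain hirr | ⟨c, l', hlen, hchain', hlast, hword'⟩ :=
      nonBacktracking_or_exists_shorter hadj hshortcut a b l hchain
    · cases l with
      | nil => exact (List.isChain_cons_cons.1 hchain).1
      | cons c l => exact absurd hword hirr.mk_walkWord_ne_one
    · exact hlast ▸ ih _ hlen c l' hchain' (hword'.trans hword) rfl

end Words

/-! ### The cocycle of a cut decomposition -/

section Cocycle

variable {X : Type*} [MetricSpace X] {Y : Set X} {f : ℝ → X} {ε : ℝ}

/-- Steps of a walk through pairs (parameter of `f`, vertex), where the vertex `q` stands for the
set `V q`: vertices joined by a step are equal or adjacent and their sets meet. -/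
structure IsWalkStep {A B : Type*} (f : ℝ → X) (ε : ℝ) (V : A ⊕ B → Set X)
    (a b : ℝ × (A ⊕ B)) : Prop where
  thin : Thin f ε a.1 b.1
  mem_left : f a.1 ∈ V a.2
  mem_right : f b.1 ∈ V b.2
  nonempty_inter : (V a.2 ∩ V b.2).Nonempty
  eq_or_adj : a.2 = b.2 ∨ (completeBipartiteGraph A B).Adj a.2 b.2

theorem IsWalkStep.shortcut {A B : Type*} {V : A ⊕ B → Set X} {a b c : ℝ × (A ⊕ B)}
    (hV : ∀ q, ∀ x ∈ V q, ∀ y ∈ V q, dist x y ≤ ε) (hab : IsWalkStep f (2 * ε) V a b)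
    (hbc : IsWalkStep f (2 * ε) V b c) (h : a.2 = b.2 ∨ b.2 = c.2 ∨ a.2 = c.2) :
    IsWalkStep f (2 * ε) V a c := by
  have hinter : (V a.2 ∩ V c.2).Nonempty := by
    rcases h with h | h | h
    · exact h ▸ hbc.nonempty_inter
    · exact h ▸ hab.nonempty_inter
    · exact ⟨f c.1, h ▸ hbc.mem_right, hbc.mem_right⟩
  have hadj : a.2 = c.2 ∨ (completeBipartiteGraph A B).Adj a.2 c.2 := by
    rcases h with h | h | h
    · exact h ▸ hbc.eq_or_adj
    · exact h ▸ hab.eq_or_adj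
    · exact .inl h
  obtain ⟨z, hza, hzc⟩ := hinter
  refine ⟨.node hab.thin hbc.thin ?_, hab.mem_left, hbc.mem_right, ⟨z, hza, hzc⟩, hadj⟩
  linarith [dist_triangle (f a.1) z (f c.1), hV _ _ hab.mem_left _ hza, hV _ _ hzc _ hbc.mem_right]

namespace CutDecomposition

/-- The set named by a vertex: the ball about a cut point, or the points with a given cell. -/
def part (D : CutDecomposition Y ε) : X ⊕ Set X → Set X
  | .inl p => Metric.ball p D.radius
  | .inr σ => {x ∈ Y | D.cell x = σ}

open Classical in
/-- The vertex of a point: the point itself if it is a cut point, and its cell otherwise. -/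
noncomputable def vertex (D : CutDecomposition Y ε) (x : X) : X ⊕ Set X :=
  if x ∈ D.cut then .inl x else .inr (D.cell x)

open Classical in
/-- The vertex through which one passes from `x` to a nearby point `y`: the cut point whose ball
contains both, if there is one; otherwise `x` and `y` lie in the same cell. -/
noncomputable def middle (D : CutDecomposition Y ε) (x y : X) : X ⊕ Set X :=
  if h : ∃ p ∈ D.cut, dist x p < D.radius ∧ dist y p < D.radius then .inl h.choose else D.vertex x

/-- The element of the free group on pairs (cut point, cell) read along the walk from `x` to `y`;
it is a cocycle at small scale. -/
noncomputable def transition (D : CutDecomposition Y ε) (x y : X) : FreeGroup (X × Set X) :=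
  FreeGroup.mk (edgeWord (D.vertex x) (D.middle x y)) *
    FreeGroup.mk (edgeWord (D.middle x y) (D.vertex y))

variable (D : CutDecomposition Y ε) {p x y z : X}

theorem dist_le_of_mem_part (q : X ⊕ Set X) : ∀ x ∈ D.part q, ∀ y ∈ D.part q, dist x y ≤ ε := by
  rcases q with p | σ
  · intro x hx y hy
    linarith [dist_triangle_right x y p, Metric.mem_ball.1 hx, Metric.mem_ball.1 hy,
      D.two_mul_radius_le]
  · exact fun x hx y hy => D.dist_le_of_cell_eq x hx.1 y hy.1 (hx.2.trans hy.2.symm)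

theorem mem_part_vertex (hx : x ∈ Y) : x ∈ D.part (D.vertex x) := by
  unfold vertex
  split_ifs
  · exact Metric.mem_ball_self D.radius_pos
  · exact ⟨hx, rfl⟩

theorem vertex_eq_or_adj_inl (hp : p ∈ D.cut) (hx : dist x p < D.radius) :
    D.vertex x = .inl p ∨ (completeBipartiteGraph X (Set X)).Adj (D.vertex x) (.inl p) := by
  unfold vertex
  split_ifs with hxcut
  · rw [D.eq_of_dist_lt x hxcut p hp x (by simpa using D.radius_pos) hx]
    exact .inl rfl
  · simp

theorem middle_eq_inl (hp : p ∈ D.cut) (hx : dist x p < D.radius) (hy : dist y p < D.radius) :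
    D.middle x y = .inl p := by
  have h : ∃ p ∈ D.cut, dist x p < D.radius ∧ dist y p < D.radius := ⟨p, hp, hx, hy⟩
  rw [middle, dif_pos h]
  exact congrArg _ (D.eq_of_dist_lt _ h.choose_spec.1 p hp x h.choose_spec.2.1 hx)

theorem near_cut_or_vertex_eq (hx : x ∈ Y) :
    (∃ p ∈ D.cut, ∀ y ∈ Y, dist y x < D.lebesgue → dist y p < D.radius) ∨
      ∀ y ∈ Y, dist y x < D.lebesgue → D.vertex y = D.vertex x := by
  have hxx : dist x x < D.lebesgue := by simpa using D.lebesgue_pos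
  refine (D.near_cut_or_cell x hx).imp_right ?_
  rintro ⟨σ, hσ⟩ y hy hyx
  rw [vertex, if_neg (hσ y hy hyx).1, vertex, if_neg (hσ x hx hxx).1, (hσ y hy hyx).2,
    (hσ x hx hxx).2]

theorem middle_spec (hx : x ∈ Y) (hy : y ∈ Y) (hyx : dist y x < D.lebesgue) :
    (∃ p ∈ D.cut, D.middle x y = .inl p ∧ dist x p < D.radius ∧ dist y p < D.radius) ∨
      D.middle x y = D.vertex x ∧ D.vertex y = D.vertex x := by
  by_cases h : ∃ p ∈ D.cut, dist x p < D.radius ∧ dist y p < D.radius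
  · obtain ⟨p, hp, hxp, hyp⟩ := h
    exact .inl ⟨p, hp, D.middle_eq_inl hp hxp hyp, hxp, hyp⟩
  · have hxx : dist x x < D.lebesgue := by simpa using D.lebesgue_pos
    obtain ⟨p, hp, hnear⟩ | hvertex := D.near_cut_or_vertex_eq hx
    · exact absurd ⟨p, hp, hnear x hx hxx, hnear y hy hyx⟩ h
    · exact .inr ⟨dif_neg h, hvertex y hy hyx⟩

theorem transition_eq_one_of_vertex_eq (h : D.vertex x = D.vertex y) : D.transition x y = 1 := by
  rw [transition, h, mk_edgeWord_mul_swap]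

theorem transition_self (x : X) : D.transition x x = 1 := D.transition_eq_one_of_vertex_eq rfl

theorem transition_mul_transition (hx : x ∈ Y) (hy : y ∈ Y) (hz : z ∈ Y)
    (hyx : dist y x < D.lebesgue) (hzx : dist z x < D.lebesgue) :
    D.transition x y * D.transition y z = D.transition x z := by
  have hxx : dist x x < D.lebesgue := by simpa using D.lebesgue_pos
  obtain ⟨p, hp, hnear⟩ | hvertex := D.near_cut_or_vertex_eq hx
  · have hxp := hnear x hx hxx
    have hyp := hnear y hy hyx
    have hzp := hnear z hz hzx
    rw [transition, transition, transition, D.middle_eq_inl hp hxp hyp, D.middle_eq_inl hp hyp hzp,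
      D.middle_eq_inl hp hxp hzp, mul_assoc, ← mul_assoc (FreeGroup.mk (edgeWord (.inl p) _)),
      mk_edgeWord_mul_swap, one_mul]
  · have hy' := hvertex y hy hyx
    have hz' := hvertex z hz hzx
    rw [D.transition_eq_one_of_vertex_eq hy'.symm, D.transition_eq_one_of_vertex_eq hz'.symm,
      D.transition_eq_one_of_vertex_eq (hy'.trans hz'.symm), one_mul]

variable {s t : ℝ}

theorem mem_part_middle (hx : x ∈ Y) (hy : y ∈ Y) (hyx : dist y x < D.lebesgue) :
    x ∈ D.part (D.middle x y) ∧ y ∈ D.part (D.middle x y) := by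
  obtain ⟨p, -, hmid, hxp, hyp⟩ | ⟨hmid, hvertex⟩ := D.middle_spec hx hy hyx
  · exact hmid ▸ ⟨hxp, hyp⟩
  · exact hmid ▸ ⟨D.mem_part_vertex hx, hvertex ▸ D.mem_part_vertex hy⟩

theorem isWalkStep_vertex_middle (hε : 0 ≤ ε) (hs : f s ∈ Y) (ht : f t ∈ Y)
    (hts : dist (f t) (f s) < D.lebesgue) :
    IsWalkStep f (2 * ε) D.part (s, D.vertex (f s)) (s, D.middle (f s) (f t)) where
  thin := .leaf le_rfl (by linarith)
  mem_left := D.mem_part_vertex hs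
  mem_right := (D.mem_part_middle hs ht hts).1
  nonempty_inter := ⟨f s, D.mem_part_vertex hs, (D.mem_part_middle hs ht hts).1⟩
  eq_or_adj := by
    obtain ⟨p, hp, hmid, hsp, -⟩ | ⟨hmid, -⟩ := D.middle_spec hs ht hts
    · exact hmid ▸ D.vertex_eq_or_adj_inl hp hsp
    · exact .inl hmid.symm

theorem isWalkStep_middle_vertex (hst : s ≤ t) (hlen : t - s ≤ 2 * ε) (hs : f s ∈ Y)
    (ht : f t ∈ Y) (hts : dist (f t) (f s) < D.lebesgue) :
    IsWalkStep f (2 * ε) D.part (s, D.middle (f s) (f t)) (t, D.vertex (f t)) where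
  thin := .leaf hst hlen
  mem_left := (D.mem_part_middle hs ht hts).1
  mem_right := D.mem_part_vertex ht
  nonempty_inter := ⟨f t, (D.mem_part_middle hs ht hts).2, D.mem_part_vertex ht⟩
  eq_or_adj := by
    obtain ⟨p, hp, hmid, -, htp⟩ | ⟨hmid, hvertex⟩ := D.middle_spec hs ht hts
    · rw [hmid, eq_comm, SimpleGraph.adj_comm]
      exact D.vertex_eq_or_adj_inl hp htp
    · exact .inl (hmid.trans hvertex.symm)

theorem exists_isChain_isWalkStep (hε : 0 ≤ ε) (n : ℕ) (s : ℕ → ℝ) (hmem : ∀ i ≤ n, f (s i) ∈ Y)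
    (hmono : ∀ i < n, s i ≤ s (i + 1)) (hlen : ∀ i < n, s (i + 1) - s i ≤ 2 * ε)
    (hclose : ∀ i < n, dist (f (s (i + 1))) (f (s i)) < D.lebesgue) :
    ∃ l, List.IsChain (IsWalkStep f (2 * ε) D.part) ((s 0, D.vertex (f (s 0))) :: l) ∧
      l.getLastD (s 0, D.vertex (f (s 0))) = (s n, D.vertex (f (s n))) ∧
      FreeGroup.mk (walkWord (((s 0, D.vertex (f (s 0))) :: l).map Prod.snd)) =
        ((List.range n).map fun i => D.transition (f (s i)) (f (s (i + 1)))).prod := by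
  induction n generalizing s with
  | zero => exact ⟨[], by simp, rfl, rfl⟩
  | succ n ih =>
    obtain ⟨l, hchain, hlast, hword⟩ := ih (fun i => s (i + 1)) (fun i hi => hmem _ (by lia))
      (fun i hi => hmono _ (by lia)) (fun i hi => hlen _ (by lia)) fun i hi => hclose _ (by lia)
    have hs : f (s 0) ∈ Y := hmem 0 (by lia)
    have ht : f (s 1) ∈ Y := hmem 1 (by lia)
    have hts := hclose 0 (by lia)
    refine ⟨(s 0, D.middle (f (s 0)) (f (s 1))) :: (s 1, D.vertex (f (s 1))) :: l, ?_, ?_, ?_⟩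
    · exact List.isChain_cons_cons.2 ⟨D.isWalkStep_vertex_middle hε hs ht hts,
        List.isChain_cons_cons.2 ⟨D.isWalkStep_middle_vertex (hmono 0 (by lia)) (hlen 0 (by lia))
          hs ht hts, hchain⟩⟩
    · simpa only [List.getLastD_cons] using hlast
    · rw [List.prod_range_succ', transition]
      simp only [List.map_cons, walkWord, ← FreeGroup.mul_mk, mul_assoc] at hword ⊢
      exact congrArg _ (congrArg _ hword)

theorem thin_of_prod_transition_eq_one (hε : 0 ≤ ε) (n : ℕ) (s : ℕ → ℝ)
    (hmem : ∀ i ≤ n, f (s i) ∈ Y) (hmono : ∀ i < n, s i ≤ s (i + 1))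
    (hlen : ∀ i < n, s (i + 1) - s i ≤ 2 * ε)
    (hclose : ∀ i < n, dist (f (s (i + 1))) (f (s i)) < D.lebesgue)
    (hprod : ((List.range n).map fun i => D.transition (f (s i)) (f (s (i + 1)))).prod = 1) :
    Thin f (2 * ε) (s 0) (s n) := by
  obtain ⟨l, hchain, hlast, hword⟩ := D.exists_isChain_isWalkStep hε n s hmem hmono hlen hclose
  cases l with
  | nil =>
    have heq : s 0 = s n := congrArg Prod.fst hlast
    exact .leaf heq.le (by linarith)
  | cons b l =>
    have hstep := rel_getLastD_of_mk_walkWord_eq_one (label := Prod.snd)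
      (fun _ _ h => h.eq_or_adj) (fun _ _ _ => IsWalkStep.shortcut D.dist_le_of_mem_part) _ b l
      hchain (hword.trans hprod)
    rw [List.getLastD_cons] at hlast
    exact (hlast ▸ hstep).thin

end CutDecomposition

end Cocycle

/-! ### Null-homotopic loops have thin subdivisions -/

section Grid

open scoped unitInterval

theorem prod_mul_eq_mul_prod_of_squares {G : Type*} [Monoid G] (n : ℕ) {top bottom side : ℕ → G}
    (h : ∀ i < n, bottom i * side (i + 1) = side i * top i) :
    ((List.range n).map bottom).prod * side n = side 0 * ((List.range n).map top).prod := by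
  induction n with
  | zero => simp
  | succ n ih =>
    rw [List.prod_range_succ, List.prod_range_succ, mul_assoc, h n n.lt_succ_self, ← mul_assoc,
      ih fun i hi => h i (hi.trans n.lt_succ_self), mul_assoc]

theorem prod_eq_one_of_grid {G : Type*} [Monoid G] {m n : ℕ} {horiz vert : ℕ → ℕ → G}
    (hsquare : ∀ i < m, ∀ j < n, horiz i j * vert (i + 1) j = vert i j * horiz i (j + 1))
    (hleft : ∀ j < n, vert 0 j = 1) (hright : ∀ j < n, vert m j = 1)
    (htop : ∀ i < m, horiz i n = 1) : ((List.range m).map fun i => horiz i 0).prod = 1 := by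
  have hrow : ∀ j ≤ n, ((List.range m).map fun i => horiz i 0).prod =
      ((List.range m).map fun i => horiz i j).prod := by
    intro j hj
    induction j with
    | zero => rfl
    | succ j ih =>
      rw [ih (by lia)]
      simpa only [hleft j hj, hright j hj, mul_one, one_mul] using
        prod_mul_eq_mul_prod_of_squares m (side := fun i => vert i j) fun i hi => hsquare i hi j hj
  rw [hrow n le_rfl]
  exact List.prod_eq_one (by simpa using htop)

theorem exists_monotone_grid_dist_lt {Z : Type*} [PseudoMetricSpace Z] {Φ : I × I → Z}
    (hΦ : Continuous Φ) {η : ℝ} (hη : 0 < η) :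
    ∃ (t : ℕ → I) (n : ℕ), Monotone t ∧ t 0 = 0 ∧ t n = 1 ∧
      ∀ i j, ∀ z ∈ Icc (t i) (t (i + 1)) ×ˢ Icc (t j) (t (j + 1)),
        ∀ w ∈ Icc (t i) (t (i + 1)) ×ˢ Icc (t j) (t (j + 1)), dist (Φ z) (Φ w) < η := by
  obtain ⟨t, h0, hmono, ⟨n, hn⟩, hsub⟩ :=
    exists_monotone_Icc_subset_open_cover_unitInterval_prod_self
      (c := fun y => Φ ⁻¹' Metric.ball y (η / 2)) (fun y => Metric.isOpen_ball.preimage hΦ)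
      fun z _ => mem_iUnion.2 ⟨Φ z, Metric.mem_ball_self (half_pos hη)⟩
  refine ⟨t, n, hmono, h0, hn n le_rfl, fun i j z hz w hw => ?_⟩
  obtain ⟨y, hy⟩ := hsub i j
  linarith [dist_triangle_right (Φ z) (Φ w) y, Metric.mem_ball.1 (hy hz), Metric.mem_ball.1 (hy hw)]

theorem NullHomotopicOn.exists_grid {X : Type*} [PseudoMetricSpace X] {f : ℝ → X} {a b η : ℝ}
    (hnull : NullHomotopicOn f a b) (hab : a < b) (hη : 0 < η) :
    ∃ (s : ℕ → ℝ) (F : ℕ → ℕ → X) (n : ℕ), Monotone s ∧ s 0 = a ∧ s n = b ∧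
      (∀ i, s i ∈ Icc a b) ∧ (∀ i, s (i + 1) - s i < η) ∧ (∀ i j, F i j ∈ f '' Icc a b) ∧
      (∀ i, F i 0 = f (s i)) ∧ (∀ i, F i n = f a) ∧ (∀ j, F 0 j = f a) ∧ (∀ j, F n j = f b) ∧
      ∀ i j, ∀ i' ∈ Icc i (i + 1), ∀ j' ∈ Icc j (j + 1), dist (F i' j') (F i j) < η := by
  obtain ⟨H, hcont, hbottom, htop, hside, hmem⟩ := hnull
  let e : I → ℝ := fun τ => (iccHomeoI a b hab).symm τ
  have he : Continuous e := continuous_subtype_val.comp (iccHomeoI a b hab).symm.continuous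
  have heI : ∀ τ, e τ ∈ Icc a b := fun τ => Subtype.coe_prop _
  have he0 : e 0 = a := by simp [e]
  have he1 : e 1 = b := by simp [e]
  have hemono : Monotone e := fun τ τ' h => by
    simpa [e] using mul_le_mul_of_nonneg_left (Subtype.coe_le_coe.2 h) (sub_nonneg.2 hab.le)
  have hΦ : Continuous fun z : I × I => (H (e z.1, z.2), e z.1) :=
    (hcont.comp_continuous (by fun_prop) fun z => ⟨heI z.1, z.2.2⟩).prodMk (he.comp continuous_fst)
  obtain ⟨t, n, htmono, ht0, htn, hfine⟩ := exists_monotone_grid_dist_lt hΦ hη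
  have hclose : ∀ i j, ∀ i' ∈ Icc i (i + 1), ∀ j' ∈ Icc j (j + 1),
      dist (H (e (t i'), t j'), e (t i')) (H (e (t i), t j), e (t i)) < η :=
    fun i j i' hi' j' hj' => hfine i j (t i', t j')
      ⟨⟨htmono hi'.1, htmono hi'.2⟩, htmono hj'.1, htmono hj'.2⟩ (t i, t j)
      ⟨⟨le_rfl, htmono i.le_succ⟩, le_rfl, htmono j.le_succ⟩
  refine ⟨fun i => e (t i), fun i j => H (e (t i), t j), n, hemono.comp htmono, by simp [ht0, he0],
    by simp [htn, he1], fun i => heI _, fun i => ?_, fun i j => hmem _ ⟨heI _, (t j).2⟩,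
    fun i => by simpa [ht0] using hbottom _ (heI (t i)),
    fun i => by simpa [htn] using htop _ (heI (t i)),
    fun j => by simpa [ht0, he0] using (hside _ (t j).2).1,
    fun j => by simpa [htn, he1] using (hside _ (t j).2).2,
    fun i j i' hi' j' hj' => (max_lt_iff.1 (hclose i j i' hi' j' hj')).1⟩
  have hstep := (max_lt_iff.1 (hclose i 0 (i + 1) (by simp) 0 (by simp))).2
  exact (le_abs_self _).trans_lt hstep

theorem thin_of_nullHomotopicOn {X : Type*} [MetricSpace X] {f : ℝ → X} {K : NNReal} {a b ε : ℝ}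
    (hf : LipschitzWith K f) (hab : a < b) (hnull : NullHomotopicOn f a b) (hε : 0 < ε) :
    Thin f ε a b := by
  obtain ⟨D⟩ := nonempty_cutDecomposition hf a b (half_pos hε)
  obtain ⟨s, F, n, hmono, hs0, hsn, hsI, hstep, hmem, hbottom, htop, hleft, hright, hclose⟩ :=
    hnull.exists_grid hab (lt_min D.lebesgue_pos hε)
  have hfine : ∀ i j, ∀ i' ∈ Icc i (i + 1), ∀ j' ∈ Icc j (j + 1),
      dist (F i' j') (F i j) < D.lebesgue :=
    fun i j i' hi' j' hj' => (hclose i j i' hi' j' hj').trans_le (min_le_left _ _)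
  have hprod : ((List.range n).map fun i => D.transition (F i 0) (F (i + 1) 0)).prod = 1 := by
    refine prod_eq_one_of_grid (n := n) (horiz := fun i j => D.transition (F i j) (F (i + 1) j))
      (vert := fun i j => D.transition (F i j) (F i (j + 1))) (fun i _ j _ => ?_)
      (fun j _ => ?_) (fun j _ => ?_) fun i _ => ?_
    · rw [D.transition_mul_transition (hmem _ _) (hmem _ _) (hmem _ _),
        D.transition_mul_transition (hmem _ _) (hmem _ _) (hmem _ _)] <;>
      exact hfine _ _ _ (by simp) _ (by simp)
    · rw [hleft, hleft, D.transition_self]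
    · rw [hright, hright, D.transition_self]
    · rw [htop, htop, D.transition_self]
  have hthin := D.thin_of_prod_transition_eq_one (f := f) (half_pos hε).le n s
    (fun i _ => mem_image_of_mem f (hsI i)) (fun i _ => hmono i.le_succ)
    (fun i _ => by linarith [hstep i, min_le_right D.lebesgue ε])
    (fun i _ => by simpa only [hbottom] using hfine i 0 (i + 1) (by simp) 0 (by simp))
    (by simpa only [hbottom] using hprod)
  rwa [hs0, hsn, mul_div_cancel₀ ε two_ne_zero] at hthin

end Grid

/-! ### Unit speed -/

section UnitSpeed

variable {X : Type*} [PseudoEMetricSpace X] {f g : ℝ → X} {a b r u v : ℝ}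

theorem hasUnitSpeedOn_Icc_iff : HasUnitSpeedOn f (Icc a b) ↔ ∀ s t, a ≤ s → s ≤ t → t ≤ b →
    eVariationOn f (Icc s t) = ENNReal.ofReal (t - s) := by
  have hinter : ∀ s t, a ≤ s → t ≤ b → Icc a b ∩ Icc s t = Icc s t := fun s t hs ht =>
    inter_eq_right.2 (Icc_subset_Icc hs ht)
  rw [HasUnitSpeedOn, hasConstantSpeedOnWith_iff_ordered]
  constructor
  · intro hf s t hs hst ht
    simpa [hinter s t hs ht] using hf ⟨hs, hst.trans ht⟩ ⟨hs.trans hst, ht⟩ hst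
  · intro hf s hs t ht hst
    simpa [hinter s t hs.1 ht.2] using hf s t hs.1 hst ht.2

theorem hasUnitSpeedOn_Icc_mono (hf : HasUnitSpeedOn f (Icc a b)) (hau : a ≤ u) (hvb : v ≤ b) :
    HasUnitSpeedOn f (Icc u v) := hasUnitSpeedOn_Icc_iff.2 fun s t hs hst ht =>
  hasUnitSpeedOn_Icc_iff.1 hf s t (hau.trans hs) hst (ht.trans hvb)

theorem lipschitzOnWith_of_hasUnitSpeedOn {S : Set ℝ} (hf : HasUnitSpeedOn f S) :
    LipschitzOnWith 1 f S := by
  intro x hx y hy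
  wlog hxy : x ≤ y generalizing x y
  · simpa only [edist_comm] using this hy hx (le_of_not_ge hxy)
  calc edist (f x) (f y) ≤ eVariationOn f (S ∩ Icc x y) :=
        eVariationOn.edist_le f ⟨hx, left_mem_Icc.2 hxy⟩ ⟨hy, right_mem_Icc.2 hxy⟩
    _ = (1 : NNReal) * edist x y := by
        rw [hf hx hy, edist_comm, edist_dist, Real.dist_eq, abs_of_nonneg (sub_nonneg.2 hxy)]
        simp

theorem hasUnitSpeedOn_congr (hf : HasUnitSpeedOn f (Icc a b)) (hfg : EqOn f g (Icc a b)) :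
    HasUnitSpeedOn g (Icc a b) := fun _ hs _ ht =>
  (eVariationOn.eq_of_eqOn (hfg.mono inter_subset_left)).symm.trans (hf hs ht)

theorem hasUnitSpeedOn_comp_const_sub (hf : HasUnitSpeedOn f (Icc a b)) :
    HasUnitSpeedOn (fun t => f (r - t)) (Icc (r - b) (r - a)) := by
  rw [hasUnitSpeedOn_Icc_iff] at hf ⊢
  intro s t hs hst ht
  have hanti : AntitoneOn (fun t => r - t) (Icc s t) := fun _ _ _ _ hxy => sub_le_sub_left hxy r
  have hvar := eVariationOn.comp_eq_of_antitoneOn f _ hanti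
  rw [image_const_sub_Icc, hf _ _ (by linarith) (by linarith) (by linarith)] at hvar
  simpa only [Function.comp_def, sub_sub_sub_cancel_left] using hvar

theorem hasUnitSpeedOn_comp_sub_const (hf : HasUnitSpeedOn f (Icc a b)) :
    HasUnitSpeedOn (fun t => f (t - r)) (Icc (a + r) (b + r)) := by
  simpa [sub_eq_add_neg, add_comm] using
    hasUnitSpeedOn_comp_const_sub (r := r) (hasUnitSpeedOn_comp_const_sub (r := 0) hf)

end UnitSpeed

/-! ### Folds in concatenations of weakly normal paths -/

section Fold

variable {X : Type*} {f : ℝ → X} {h : ℝ → ℝ} {a b e j u v x y : ℝ}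

/-- Near the parameter `j`, up to distance `e`, the path `f` turns round and retraces itself. -/
def FoldsAt (f : ℝ → X) (j e : ℝ) : Prop := ∀ t ∈ Icc 0 e, f (j - t) = f (j + t)

theorem strictMonoOn_of_forall_not_excursion (hh : Continuous h)
    (hleft : ∀ x ∈ Icc a b, h a ≤ h x)
    (hexc : ∀ s t, a ≤ s → s < t → t ≤ b → h s = h t → ¬∀ x ∈ Icc s t, h s ≤ h x) :
    StrictMonoOn h (Icc a b) := by
  intro x hx y hy hxy
  by_contra! hyx
  obtain ⟨m, hm, hmin⟩ : ∃ m ∈ Icc x y, ∀ z ∈ Icc x y, h m ≤ h z :=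
    isCompact_Icc.exists_isMinOn (nonempty_Icc.2 hxy.le) hh.continuousOn
  have hmb : m ≤ b := hm.2.trans hy.2
  rcases hm.1.eq_or_lt with rfl | hxm
  · exact hexc x y hx.1 hxy hy.2 (le_antisymm (hmin y (right_mem_Icc.2 hxy.le)) hyx) hmin
  · obtain ⟨z, haz, hz⟩ := exists_isAncestorAt hh hx.1 (hleft m ⟨hx.1.trans hm.1, hmb⟩)
      (hmin x (left_mem_Icc.2 hxy.le))
    refine hexc z m haz (hz.le.trans_lt hxm) hmb hz.height_eq fun w hw => ?_
    rw [hz.height_eq]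
    rcases le_total w x with hwx | hxw
    · exact hz.le_height w ⟨hw.1, hwx⟩
    · exact hmin w ⟨hxw, hw.2.trans hm.2⟩

namespace IsContourOn

theorem comp_const_sub [PseudoMetricSpace X] {r ε : ℝ} (hf : IsContourOn h f ε a b) :
    IsContourOn (fun t => h (r - t)) (fun t => f (r - t)) ε (r - b) (r - a) := by
  intro x y hx hxy hy
  obtain ⟨m, hm, hdist⟩ :=
    hf (x := r - y) (y := r - x) (by linarith) (by linarith) (by linarith)
  refine ⟨r - m, ⟨by linarith [hm.2], by linarith [hm.1]⟩, ?_⟩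
  rw [dist_comm]
  simp only [sub_sub_cancel]
  linarith

variable [MetricSpace X]

theorem strictMonoOn_of_weaklyNormalOn (hf : IsContourOn h f 0 a b) (hh : LipschitzWith 1 h)
    (hnormal : WeaklyNormalOn f a b) (hleft : ∀ x ∈ Icc a b, h a ≤ h x) :
    StrictMonoOn h (Icc a b) :=
  strictMonoOn_of_forall_not_excursion hh.continuous hleft fun _ _ hs hst ht hends hmin =>
    have hfst := hf.mono hs ht
    hnormal hs hst ht (hfst.eq_of_excursion hst.le hends hmin)
      (hfst.nullHomotopicOn_of_excursion hh hst.le hends hmin)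

theorem strictAntiOn_of_weaklyNormalOn (hf : IsContourOn h f 0 a b) (hh : LipschitzWith 1 h)
    (hnormal : WeaklyNormalOn f a b) (hright : ∀ x ∈ Icc a b, h b ≤ h x) :
    StrictAntiOn h (Icc a b) := by
  have hreflect : ∀ {x}, x ∈ Icc a b → a + b - x ∈ Icc a b := fun hx =>
    ⟨by linarith [hx.2], by linarith [hx.1]⟩
  have hmono : StrictMonoOn (fun t => h (a + b - t)) (Icc a b) := by
    refine strictMonoOn_of_weaklyNormalOn (f := fun t => f (a + b - t)) ?_ ?_ ?_ ?_
    · simpa only [add_sub_cancel_left, add_sub_cancel_right] using hf.comp_const_sub (r := a + b)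
    · simpa [Function.comp_def] using hh.comp (IsometryEquiv.subLeft (a + b)).isometry.lipschitz
    · simpa only [add_sub_cancel_left, add_sub_cancel_right] using
        hnormal.comp_const_sub (r := a + b)
    · simpa only [add_sub_cancel_left] using fun x hx => hright _ (hreflect hx)
  intro x hx y hy hxy
  simpa only [sub_sub_cancel] using
    hmono (hreflect hy) (hreflect hx) (sub_lt_sub_left hxy (a + b))

theorem eq_of_height_eq (hf : IsContourOn h f 0 u v) (hup : MonotoneOn h (Icc u j))
    (hdown : AntitoneOn h (Icc j v)) (hx : x ∈ Icc u j) (hy : y ∈ Icc j v) (hxy : h x = h y) :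
    f x = f y := by
  refine (hf.mono hx.1 hy.2).eq_of_excursion (hx.2.trans hy.1) hxy fun z hz => ?_
  rcases le_total z j with hzj | hjz
  · exact hup hx ⟨hx.1.trans hz.1, hzj⟩ hz.1
  · exact hxy.trans_le (hdown ⟨hjz, hz.2.trans hy.2⟩ hy hz.2)

/-- Along a single peak `f` is a function `g` of the height, so both sides of the peak have the
variation of `g`. -/
theorem eVariationOn_eq_of_height_eq (hf : IsContourOn h f 0 u v) (hh : Continuous h)
    (hup : StrictMonoOn h (Icc u j)) (hdown : StrictAntiOn h (Icc j v)) (hx : x ∈ Icc u j)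
    (hy : y ∈ Icc j v) (hxy : h x = h y) :
    eVariationOn f (Icc x j) = eVariationOn f (Icc j y) := by
  have hxj : Icc x j ⊆ Icc u j := Icc_subset_Icc_left hx.1
  have hjy : Icc j y ⊆ Icc j v := Icc_subset_Icc_right hy.2
  have himage_up : h '' Icc x j = Icc (h x) (h j) :=
    hh.continuousOn.image_Icc_of_monotoneOn hx.2 (hup.mono hxj).monotoneOn
  have himage_down : h '' Icc j y = Icc (h x) (h j) := by
    rw [hxy, hh.continuousOn.image_Icc_of_antitoneOn hy.1 (hdown.mono hjy).antitoneOn]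
  let g : ℝ → X := f ∘ Function.invFunOn h (Icc x j)
  have hg_up : EqOn (g ∘ h) f (Icc x j) := fun z hz =>
    congrArg f ((hup.injOn.mono hxj).leftInvOn_invFunOn hz)
  have hg_down : EqOn (g ∘ h) f (Icc j y) := fun z hz => by
    have hz' : h z ∈ h '' Icc x j := himage_up ▸ himage_down ▸ mem_image_of_mem h hz
    exact hf.eq_of_height_eq hup.monotoneOn hdown.antitoneOn
      (hxj (Function.invFunOn_mem hz')) (hjy hz) (Function.invFunOn_eq hz')
  calc eVariationOn f (Icc x j) = eVariationOn (g ∘ h) (Icc x j) :=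
        (eVariationOn.eq_of_eqOn hg_up).symm
    _ = eVariationOn g (Icc (h x) (h j)) := by
        rw [eVariationOn.comp_eq_of_monotoneOn g h (hup.mono hxj).monotoneOn, himage_up]
    _ = eVariationOn (g ∘ h) (Icc j y) := by
        rw [eVariationOn.comp_eq_of_antitoneOn g h (hdown.mono hjy).antitoneOn, himage_down]
    _ = eVariationOn f (Icc j y) := eVariationOn.eq_of_eqOn hg_down

theorem sub_eq_sub_of_height_eq (hf : IsContourOn h f 0 u v) (hh : Continuous h)
    (hspeed : HasUnitSpeedOn f (Icc u v)) (hup : StrictMonoOn h (Icc u j))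
    (hdown : StrictAntiOn h (Icc j v)) (hx : x ∈ Icc u j) (hy : y ∈ Icc j v) (hxy : h x = h y) :
    j - x = y - j := by
  have hlen := hf.eVariationOn_eq_of_height_eq hh hup hdown hx hy hxy
  rw [hasUnitSpeedOn_Icc_iff] at hspeed
  rwa [hspeed x j hx.1 hx.2 (hy.1.trans hy.2), hspeed j y (hx.1.trans hx.2) hy.1 hy.2,
    ENNReal.ofReal_eq_ofReal_iff (sub_nonneg.2 hx.2) (sub_nonneg.2 hy.1)] at hlen

theorem foldsAt (hf : IsContourOn h f 0 u v) (hh : Continuous h)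
    (hspeed : HasUnitSpeedOn f (Icc u v)) (hup : StrictMonoOn h (Icc u j))
    (hdown : StrictAntiOn h (Icc j v)) (huj : u ≤ j) (hjv : j ≤ v) (hends : h u = h v) :
    FoldsAt f j (j - u) := by
  intro t ht
  have hx : j - t ∈ Icc u j := ⟨by linarith [ht.2], by linarith [ht.1]⟩
  have hheight : h (j - t) ∈ Icc (h v) (h j) :=
    ⟨hends ▸ hup.monotoneOn (left_mem_Icc.2 huj) hx hx.1,
      hup.monotoneOn hx (right_mem_Icc.2 huj) hx.2⟩
  obtain ⟨y, hy, hyx⟩ := intermediate_value_Icc' hjv hh.continuousOn hheight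
  have hlen := hf.sub_eq_sub_of_height_eq hh hspeed hup hdown hx hy hyx.symm
  obtain rfl : y = j + t := by linarith
  exact hf.eq_of_height_eq hup.monotoneOn hdown.antitoneOn hx hy hyx.symm

end IsContourOn

theorem FoldsAt.isContourOn [PseudoMetricSpace X] (hfold : FoldsAt f j e)
    (hf : LipschitzWith 1 f) : IsContourOn (fun t => -|t - j|) f 0 (j - e) (j + e) := by
  have hreflect : ∀ x ∈ Icc (j - e) (j + e), f x = f (j + |x - j|) := fun x hx => by
    rcases le_total x j with hxj | hjx
    · have := hfold (j - x) ⟨by linarith, by linarith [hx.1]⟩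
      rwa [sub_sub_cancel, ← neg_sub x j, ← abs_of_nonpos (sub_nonpos.2 hxj)] at this
    · rw [abs_of_nonneg (sub_nonneg.2 hjx), add_sub_cancel]
  intro x y hx hxy hy
  have hdist : dist (f x) (f y) ≤ |(|x - j| - |y - j|)| := by
    rw [hreflect x ⟨hx, hxy.trans hy⟩, hreflect y ⟨hx.trans hxy, hy⟩]
    simpa [Real.dist_eq] using hf.dist_le_mul (j + |x - j|) (j + |y - j|)
  rcases le_total |x - j| |y - j| with hle | hle
  · refine ⟨y, right_mem_Icc.2 hxy, hdist.trans ?_⟩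
    rw [abs_of_nonpos (sub_nonpos.2 hle)]
    linarith
  · refine ⟨x, left_mem_Icc.2 hxy, hdist.trans ?_⟩
    rw [abs_of_nonneg (sub_nonneg.2 hle)]
    linarith

namespace WeaklyNormalOn

variable [MetricSpace X]

theorem not_foldsAt (hnormal : WeaklyNormalOn f a b) (hf : LipschitzWith 1 f) (he : 0 < e)
    (hae : a ≤ j - e) (heb : j + e ≤ b) : ¬FoldsAt f j e := by
  intro hfold
  have hheight : LipschitzWith 1 fun t : ℝ => -|t - j| :=
    LipschitzWith.of_dist_le_mul fun x y => by
      simpa [Real.dist_eq, abs_sub_comm] using abs_abs_sub_abs_le_abs_sub (x - j) (y - j)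
  refine hnormal hae (by linarith) heb (hfold e (right_mem_Icc.2 he.le))
    ((hfold.isContourOn hf).nullHomotopicOn_of_excursion hheight (by linarith) (by simp) ?_)
  intro x hx
  have : |x - j| ≤ e := abs_le.2 ⟨by linarith [hx.1], by linarith [hx.2]⟩
  simpa [abs_of_pos he] using this

/-- A null-homotopic loop bounds a tree. Weak normality on either side of `j` leaves this tree no
branching away from `j`, so that the loop runs up and down a segment. -/
theorem of_not_foldsAt (hf : LipschitzWith 1 f) (hspeed : HasUnitSpeedOn f (Icc a b))
    (hleft : WeaklyNormalOn f a j) (hright : WeaklyNormalOn f j b)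
    (hfold : ∀ e, 0 < e → e ≤ j - a → e ≤ b - j → ¬FoldsAt f j e) : WeaklyNormalOn f a b := by
  intro u v hau huv hvb hloop hnull
  rcases le_or_gt v j with hvj | hjv
  · exact hleft hau huv hvj hloop hnull
  rcases le_or_gt j u with hju | huj
  · exact hright hju huv hvb hloop hnull
  obtain ⟨h, hh, hu, hv, hpos, hcontour⟩ := exists_isContourOn_of_forall_thin hf hloop
    fun ε hε => thin_of_nullHomotopicOn hf huv hnull hε
  have hup : StrictMonoOn h (Icc u j) :=
    (hcontour.mono le_rfl hjv.le).strictMonoOn_of_weaklyNormalOn hh (hleft.mono hau le_rfl)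
      fun x hx => hu.trans_le (hpos x ⟨hx.1, hx.2.trans hjv.le⟩)
  have hdown : StrictAntiOn h (Icc j v) :=
    (hcontour.mono huj.le le_rfl).strictAntiOn_of_weaklyNormalOn hh (hright.mono le_rfl hvb)
      fun x hx => hv.trans_le (hpos x ⟨huj.le.trans hx.1, hx.2⟩)
  have hspeed' : HasUnitSpeedOn f (Icc u v) := hasUnitSpeedOn_Icc_mono hspeed hau hvb
  have hlen : j - u = v - j := hcontour.sub_eq_sub_of_height_eq hh.continuous hspeed' hup hdown
    (left_mem_Icc.2 huj.le) (right_mem_Icc.2 hjv.le) (hu.trans hv.symm)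
  exact hfold (j - u) (by linarith) (by linarith) (by linarith)
    (hcontour.foldsAt hh.continuous hspeed' hup hdown huj.le hjv.le (hu.trans hv.symm))

end WeaklyNormalOn

end Fold

/-! ### Cancelled concatenation of ρ-paths -/

section Agreement

variable {X : Type*} [TopologicalSpace X] [T2Space X] {f g : ℝ → X} {p q : ℝ}

theorem isGreatest_sSup_agreement (hf : Continuous f) (hg : Continuous g) (hp : 0 ≤ p)
    (hq : 0 ≤ q) (h0 : f 0 = g 0) :
    IsGreatest {b | 0 ≤ b ∧ b ≤ p ∧ b ≤ q ∧ ∀ t ∈ Icc 0 b, f t = g t}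
      (sSup {b | 0 ≤ b ∧ b ≤ p ∧ b ≤ q ∧ ∀ t ∈ Icc 0 b, f t = g t}) := by
  have hrescale : {b | 0 ≤ b ∧ b ≤ p ∧ b ≤ q ∧ ∀ t ∈ Icc 0 b, f t = g t} =
      Icc 0 (min p q) ∩ ⋂ r ∈ Icc (0 : ℝ) 1, {b | f (r * b) = g (r * b)} := by
    ext b
    have himage (hb : 0 ≤ b) : Icc 0 b = (fun r => r * b) '' Icc 0 1 := by
      rw [image_mul_right_Icc zero_le_one hb, zero_mul, one_mul]
    simp only [mem_ofPred_eq, mem_inter_iff, mem_Icc, le_min_iff, mem_iInter₂, and_assoc]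
    refine and_congr_right fun hb => and_congr_right fun _ => and_congr_right fun _ => ?_
    simp only [← mem_Icc, himage hb, forall_mem_image]
  rw [hrescale]
  refine IsCompact.isGreatest_sSup (isCompact_Icc.inter_right ?_) ⟨0, ?_⟩
  · exact isClosed_biInter fun r _ => isClosed_eq (by fun_prop) (by fun_prop)
  · exact ⟨⟨le_rfl, le_min hp hq⟩, mem_iInter₂.2 fun r _ => by simpa using h0⟩

end Agreement

namespace RPath

section Basic

variable {X : Type*} [MetricSpace X] {c d r : RPath X} {f : ℝ → X} {l : ℝ}

theorem weaklyNormalOn (c : RPath X) : WeaklyNormalOn c.toFun 0 c.len :=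
  fun u v hu huv hv hloop hnull => c.weaklyNormal ⟨u, v, hu, huv, hv, hloop, hnull⟩

theorem hasUnitSpeedOn (c : RPath X) : HasUnitSpeedOn c.toFun (Icc 0 c.len) :=
  hasUnitSpeedOn_Icc_iff.2 c.arclength

theorem toFun_projIcc (c : RPath X) (t : ℝ) :
    c.toFun (projIcc 0 c.len c.len_nonneg t) = c.toFun t := by
  rcases le_total t 0 with ht | ht
  · rw [projIcc_of_le_left _ ht, c.clamp_left t ht]
  rcases le_total t c.len with ht' | ht'
  · rw [projIcc_of_mem _ ⟨ht, ht'⟩]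
  · rw [projIcc_of_right_le _ ht', c.clamp_right t ht']

theorem lipschitzWith (c : RPath X) : LipschitzWith 1 c.toFun := by
  have hcomp := (lipschitzOnWith_of_hasUnitSpeedOn c.hasUnitSpeedOn).to_restrict.comp
    (LipschitzWith.projIcc c.len_nonneg)
  rw [mul_one] at hcomp
  convert hcomp using 1
  exact funext fun t => (c.toFun_projIcc t).symm

theorem eq_of_eqOn (hlen : c.len = d.len) (hcd : EqOn c.toFun d.toFun (Icc 0 c.len)) : c = d := by
  have hfun : c.toFun = d.toFun := funext fun t => by
    rw [← c.toFun_projIcc, ← d.toFun_projIcc, hcd (Subtype.prop _), coe_projIcc, coe_projIcc, hlen]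
  cases c
  cases d
  congr

theorem exists_len_eq_eqOn (hl : 0 ≤ l) (hspeed : HasUnitSpeedOn f (Icc 0 l))
    (hnormal : WeaklyNormalOn f 0 l) : ∃ c : RPath X, c.len = l ∧ EqOn c.toFun f (Icc 0 l) := by
  let g : ℝ → X := IccExtend hl fun t : Icc 0 l => f t
  have hgf : EqOn f g (Icc 0 l) := fun t ht => (IccExtend_of_mem hl (fun t => f t) ht).symm
  have hg_speed := hasUnitSpeedOn_congr hspeed hgf
  refine ⟨⟨l, hl, g, (lipschitzOnWith_of_hasUnitSpeedOn hg_speed).continuousOn,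
    hasUnitSpeedOn_Icc_iff.1 hg_speed, fun t ht => ?_, fun t ht => ?_, ?_⟩, rfl, hgf.symm⟩
  · simp only [g, IccExtend_of_le_left hl _ ht, IccExtend_left]
  · simp only [g, IccExtend_of_right_le hl _ ht, IccExtend_right]
  · rintro ⟨u, v, hu, huv, hv, hloop, hnull⟩
    exact hnormal.congr hgf hu huv hv hloop hnull

theorem exists_isReverse (c : RPath X) : ∃ r, IsReverse c r := by
  have hspeed := hasUnitSpeedOn_comp_const_sub (r := c.len) c.hasUnitSpeedOn
  have hnormal := c.weaklyNormalOn.comp_const_sub (r := c.len)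
  rw [sub_self, sub_zero] at hspeed hnormal
  exact exists_len_eq_eqOn c.len_nonneg hspeed hnormal

theorem IsReverse.symm (hr : IsReverse c r) : IsReverse r c := by
  refine ⟨hr.1.symm, fun t ht => ?_⟩
  rw [hr.1] at ht ⊢
  rw [hr.2 _ ⟨sub_nonneg.2 ht.2, sub_le_self _ ht.1⟩, sub_sub_cancel]

theorem isGreatest_wedgeLen (hcd : c.toFun 0 = d.toFun 0) :
    IsGreatest {b | 0 ≤ b ∧ b ≤ c.len ∧ b ≤ d.len ∧ ∀ t ∈ Icc 0 b, c.toFun t = d.toFun t}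
      (wedgeLen c d) :=
  isGreatest_sSup_agreement c.lipschitzWith.continuous d.lipschitzWith.continuous c.len_nonneg
    d.len_nonneg hcd

theorem wedgeLen_comm (c d : RPath X) : wedgeLen c d = wedgeLen d c := by
  simp only [wedgeLen, eq_comm (a := c.toFun _), and_left_comm (a := _ ≤ c.len)]

theorem rhoDist_comm (c d : RPath X) : rhoDist c d = rhoDist d c := by
  rw [rhoDist, rhoDist, wedgeLen_comm, add_comm c.len]

theorem rhoDist_self (c : RPath X) : rhoDist c c = 0 := by
  obtain ⟨⟨-, hle, -, -⟩, hmax⟩ := isGreatest_wedgeLen (c := c) rfl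
  have hge : c.len ≤ wedgeLen c c := hmax ⟨c.len_nonneg, le_rfl, le_rfl, fun _ _ => rfl⟩
  rw [rhoDist]
  linarith

theorem eq_of_rhoDist_eq_zero (hcd : c.toFun 0 = d.toFun 0) (hdist : rhoDist c d = 0) :
    c = d := by
  obtain ⟨⟨-, hc, hd, hagree⟩, -⟩ := isGreatest_wedgeLen hcd
  rw [rhoDist] at hdist
  exact eq_of_eqOn (by linarith) fun t ht => hagree t ⟨ht.1, by linarith [ht.2]⟩

end Basic

section CancelConcat

variable {X : Type*} [MetricSpace X] {c c₁ c₂ d k m m₁ m₂ r : RPath X}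

theorem isGreatest_cancelAmt (hkc : k.toFun k.len = c.toFun 0) :
    IsGreatest {s | 0 ≤ s ∧ s ≤ k.len ∧ s ≤ c.len ∧
      ∀ t ∈ Icc 0 s, k.toFun (k.len - t) = c.toFun t} (cancelAmt k c) :=
  isGreatest_sSup_agreement (k.lipschitzWith.continuous.comp (continuous_const.sub continuous_id))
    c.lipschitzWith.continuous k.len_nonneg c.len_nonneg (by simpa using hkc)

theorem not_foldsAt_of_cancelAmt {f : ℝ → X} {e : ℝ} (hkc : k.toFun k.len = c.toFun 0)
    (hfk : EqOn f k.toFun (Iic (k.len - cancelAmt k c)))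
    (hfc : EqOn f (fun t => c.toFun (t - (k.len - cancelAmt k c - cancelAmt k c)))
      (Ici (k.len - cancelAmt k c)))
    (he : 0 < e) (hek : e ≤ k.len - cancelAmt k c) (hec : e ≤ c.len - cancelAmt k c) :
    ¬FoldsAt f (k.len - cancelAmt k c) e := by
  intro hfold
  obtain ⟨⟨ha, -, -, hcancel⟩, hmax⟩ := isGreatest_cancelAmt hkc
  set a := cancelAmt k c
  have hlonger : a + e ≤ a := by
    refine hmax ⟨by linarith, by linarith, by linarith, fun t ht => ?_⟩
    rcases le_total t a with hta | hat
    · exact hcancel t ⟨ht.1, hta⟩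
    · have hturn := hfold (t - a) ⟨by linarith, by linarith [ht.2]⟩
      rw [hfk (mem_Iic.2 (by linarith)), hfc (mem_Ici.2 (by linarith))] at hturn
      convert hturn using 2 <;> ring
  linarith

theorem exists_isCancelConcat (hkc : k.toFun k.len = c.toFun 0) :
    ∃ m, IsCancelConcat k c m := by
  obtain ⟨⟨ha, hak, hac, hcancel⟩, -⟩ := isGreatest_cancelAmt hkc
  set a := cancelAmt k c
  set j := k.len - a
  have hjoin : k.toFun j = c.toFun (j - (j - a)) := by
    rw [sub_sub_cancel, hcancel a (right_mem_Icc.2 ha)]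
  have hshift : LipschitzWith 1 fun t => c.toFun (t - (j - a)) := by
    simpa [Function.comp_def] using
      c.lipschitzWith.comp (IsometryEquiv.subRight (j - a)).isometry.lipschitz
  obtain ⟨f, hf, hfk, hfc⟩ := exists_lipschitzWith_eqOn_Iic_eqOn_Ici k.lipschitzWith hshift hjoin
  have hkf : EqOn k.toFun f (Icc 0 j) := (hfk.mono Icc_subset_Iic_self).symm
  have hcf : EqOn (fun t => c.toFun (t - (j - a))) f (Icc j (c.len + (j - a))) :=
    (hfc.mono Icc_subset_Ici_self).symm
  have hjk : j ≤ k.len := by linarith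
  have hspeed_left := hasUnitSpeedOn_congr (hasUnitSpeedOn_Icc_mono k.hasUnitSpeedOn le_rfl hjk) hkf
  have hspeed_right := hasUnitSpeedOn_comp_sub_const (r := j - a)
    (hasUnitSpeedOn_Icc_mono c.hasUnitSpeedOn ha le_rfl)
  have hnormal_left := (k.weaklyNormalOn.mono le_rfl hjk).congr hkf
  have hnormal_right := (c.weaklyNormalOn.mono ha le_rfl).comp_sub_const (r := j - a)
  rw [add_sub_cancel] at hspeed_right hnormal_right
  have hspeed := hspeed_left.Icc_Icc (hasUnitSpeedOn_congr hspeed_right hcf)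
  have hnormal := WeaklyNormalOn.of_not_foldsAt hf hspeed hnormal_left (hnormal_right.congr hcf)
    fun e he hej hec => not_foldsAt_of_cancelAmt hkc hfk hfc he (by linarith) (by linarith)
  obtain ⟨m, hlen, hm⟩ := exists_len_eq_eqOn (by linarith) hspeed hnormal
  refine ⟨m, by linarith, fun t ht => ?_, fun t ht => ?_⟩
  · rw [hm ⟨ht.1, by linarith [ht.2]⟩, hfk ht.2]
  · rw [hm ⟨by linarith [ht.1], hlen ▸ ht.2⟩, hfc ht.1, sub_add]

namespace IsCancelConcat

theorem toFun_zero (hm : IsCancelConcat k c m) (hkc : k.toFun k.len = c.toFun 0) :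
    m.toFun 0 = k.toFun 0 :=
  hm.2.1 0 ⟨le_rfl, sub_nonneg.2 (isGreatest_cancelAmt hkc).1.2.1⟩

theorem toFun_len (hm : IsCancelConcat k c m) (hkc : k.toFun k.len = c.toFun 0) :
    m.toFun m.len = c.toFun c.len := by
  obtain ⟨⟨-, -, hac, -⟩, -⟩ := isGreatest_cancelAmt hkc
  obtain ⟨hlen, -, hright⟩ := hm
  rw [hright m.len ⟨by linarith, le_rfl⟩, hlen]
  ring_nf

theorem cancelAmt_eq_sub (hc : IsCancelConcat r d c) (hr : IsReverse r k)
    (hrd : r.toFun r.len = d.toFun 0) : cancelAmt k c = k.len - cancelAmt r d := by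
  obtain ⟨⟨ha, har, had, hcancel⟩, -⟩ := isGreatest_cancelAmt hrd
  have hkc : k.toFun k.len = c.toFun 0 := by
    rw [hc.toFun_zero hrd, hr.2 _ ⟨k.len_nonneg, hr.1.le⟩, hr.1, sub_self]
  obtain ⟨⟨-, hbk, hbc, hcancel'⟩, hmax⟩ := isGreatest_cancelAmt hkc
  obtain ⟨hlen, hleft, hright⟩ := hc
  obtain ⟨hrlen, hrev⟩ := hr
  refine le_antisymm ?_ (hmax ⟨by linarith, by linarith, by linarith, fun t ht => ?_⟩)
  · by_contra! hlt
    refine d.weaklyNormalOn.not_foldsAt d.lipschitzWith (sub_pos.2 hlt) (j := cancelAmt r d)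
      (by linarith) (by linarith) fun t ht => ?_
    rw [← hcancel _ ⟨by linarith [ht.2], by linarith [ht.1]⟩]
    have hcont := hcancel' (k.len - cancelAmt r d + t) ⟨by linarith [ht.1], by linarith [ht.2]⟩
    rw [hright _ ⟨by linarith [ht.1], by linarith [ht.2]⟩,
      hrev _ ⟨by linarith [ht.2], by linarith [ht.1]⟩, hrlen] at hcont
    convert hcont using 2 <;> ring
  · rw [hleft t ⟨ht.1, by linarith [ht.2]⟩, hrev _ ⟨by linarith [ht.2], by linarith [ht.1]⟩]
    congr 1
    linarith

theorem eq_of_isReverse (hm : IsCancelConcat k c m) (hc : IsCancelConcat r d c)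
    (hr : IsReverse r k) (hrd : r.toFun r.len = d.toFun 0) : m = d := by
  obtain ⟨⟨-, har, -, hcancel⟩, -⟩ := isGreatest_cancelAmt hrd
  have hamt := hc.cancelAmt_eq_sub hr hrd
  obtain ⟨hlen, hleft, hright⟩ := hm
  obtain ⟨hclen, -, hcright⟩ := hc
  obtain ⟨hrlen, hrev⟩ := hr
  rw [hamt] at hlen hleft hright
  have hmd : m.len = d.len := by linarith
  refine eq_of_eqOn hmd fun t ht => ?_
  rcases le_total t (cancelAmt r d) with hta | hat
  · rw [hleft t ⟨ht.1, by linarith⟩, hrev t ⟨ht.1, by linarith⟩, hcancel t ⟨ht.1, hta⟩]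
  · rw [hright t ⟨by linarith, ht.2⟩, hcright _ ⟨by linarith, by linarith [ht.2]⟩]
    congr 1
    linarith

end IsCancelConcat

theorem wedgeLen_eq_cancelAmt_of_lt (hk₁ : k.toFun k.len = c₁.toFun 0)
    (hk₂ : k.toFun k.len = c₂.toFun 0) (hlt : cancelAmt k c₁ < cancelAmt k c₂) :
    wedgeLen c₁ c₂ = cancelAmt k c₁ := by
  obtain ⟨⟨ha₁, -, hac₁, hcancel₁⟩, hmax₁⟩ := isGreatest_cancelAmt hk₁
  obtain ⟨⟨ha₂, hak₂, hac₂, hcancel₂⟩, -⟩ := isGreatest_cancelAmt hk₂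
  obtain ⟨⟨hw, hwc₁, -, hagree⟩, hmax⟩ := isGreatest_wedgeLen (hk₁.symm.trans hk₂)
  refine le_antisymm ?_ (hmax ⟨ha₁, hac₁, by linarith, fun t ht => ?_⟩)
  · have hmin : min (wedgeLen c₁ c₂) (cancelAmt k c₂) ≤ cancelAmt k c₁ := by
      refine hmax₁ ⟨le_min hw ha₂, (min_le_right _ _).trans hak₂, (min_le_left _ _).trans hwc₁,
        fun t ht => ?_⟩
      obtain ⟨htw, hta⟩ := le_min_iff.1 ht.2
      rw [hagree t ⟨ht.1, htw⟩, hcancel₂ t ⟨ht.1, hta⟩]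
    exact (min_le_iff.1 hmin).resolve_right hlt.not_ge
  · rw [← hcancel₁ t ht, hcancel₂ t ⟨ht.1, ht.2.trans hlt.le⟩]

namespace IsCancelConcat

theorem wedgeLen_eq_of_lt (hm₁ : IsCancelConcat k c₁ m₁) (hm₂ : IsCancelConcat k c₂ m₂)
    (hk₁ : k.toFun k.len = c₁.toFun 0) (hk₂ : k.toFun k.len = c₂.toFun 0)
    (hlt : cancelAmt k c₁ < cancelAmt k c₂) : wedgeLen m₁ m₂ = k.len - cancelAmt k c₂ := by
  obtain ⟨⟨ha₁, -, hac₁, -⟩, -⟩ := isGreatest_cancelAmt hk₁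
  obtain ⟨⟨-, hak₂, hac₂, hcancel₂⟩, -⟩ := isGreatest_cancelAmt hk₂
  obtain ⟨⟨-, -, hwm₂, hagree⟩, hmax⟩ :=
    isGreatest_wedgeLen ((hm₁.toFun_zero hk₁).trans (hm₂.toFun_zero hk₂).symm)
  obtain ⟨hlen₁, hleft₁, -⟩ := hm₁
  obtain ⟨hlen₂, hleft₂, hright₂⟩ := hm₂
  refine le_antisymm ?_ (hmax ⟨by linarith, by linarith, by linarith, fun t ht => ?_⟩)
  · by_contra! hcon
    obtain ⟨e, he, hew⟩ : ∃ e, 0 < e ∧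
        e ≤ min (wedgeLen m₁ m₂ - (k.len - cancelAmt k c₂)) (cancelAmt k c₂ - cancelAmt k c₁) :=
      ⟨_, lt_min (by linarith) (by linarith), le_rfl⟩
    obtain ⟨hew, hea⟩ := le_min_iff.1 hew
    refine c₂.weaklyNormalOn.not_foldsAt c₂.lipschitzWith he (j := cancelAmt k c₂)
      (by linarith) (by linarith) fun t ht => ?_
    have hcont := hagree (k.len - cancelAmt k c₂ + t) ⟨by linarith [ht.1], by linarith [ht.2]⟩
    rw [hleft₁ _ ⟨by linarith [ht.1], by linarith [ht.2]⟩,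
      hright₂ _ ⟨by linarith [ht.1], by linarith [ht.2]⟩] at hcont
    rw [← hcancel₂ _ ⟨by linarith [ht.2], by linarith [ht.1]⟩]
    convert hcont using 2 <;> ring
  · rw [hleft₁ t ⟨ht.1, by linarith [ht.2]⟩, hleft₂ t ht]

theorem wedgeLen_eq_of_eq (hm₁ : IsCancelConcat k c₁ m₁) (hm₂ : IsCancelConcat k c₂ m₂)
    (hk₁ : k.toFun k.len = c₁.toFun 0) (hk₂ : k.toFun k.len = c₂.toFun 0)
    (heq : cancelAmt k c₁ = cancelAmt k c₂) :
    wedgeLen m₁ m₂ = k.len + wedgeLen c₁ c₂ - 2 * cancelAmt k c₁ := by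
  obtain ⟨⟨ha, hak, hac₁, hcancel₁⟩, -⟩ := isGreatest_cancelAmt hk₁
  obtain ⟨⟨-, -, hac₂, hcancel₂⟩, -⟩ := isGreatest_cancelAmt hk₂
  obtain ⟨⟨-, hwc₁, hwc₂, hagree⟩, hmax⟩ := isGreatest_wedgeLen (hk₁.symm.trans hk₂)
  obtain ⟨⟨-, hwm₁, hwm₂, hagree'⟩, hmax'⟩ :=
    isGreatest_wedgeLen ((hm₁.toFun_zero hk₁).trans (hm₂.toFun_zero hk₂).symm)
  obtain ⟨hlen₁, hleft₁, hright₁⟩ := hm₁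
  obtain ⟨hlen₂, hleft₂, hright₂⟩ := hm₂
  rw [← heq] at hac₂ hcancel₂ hlen₂ hleft₂ hright₂
  have hcommon : cancelAmt k c₁ ≤ wedgeLen c₁ c₂ := hmax ⟨ha, hac₁, hac₂, fun t ht =>
    (hcancel₁ t ht).symm.trans (hcancel₂ t ht)⟩
  have hcommon' : k.len - cancelAmt k c₁ ≤ wedgeLen m₁ m₂ :=
    hmax' ⟨by linarith, by linarith, by linarith, fun t ht =>
      (hleft₁ t ht).trans (hleft₂ t ht).symm⟩
  refine le_antisymm ?_ (hmax' ⟨by linarith, by linarith, by linarith, fun t ht => ?_⟩)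
  · suffices wedgeLen m₁ m₂ - k.len + 2 * cancelAmt k c₁ ≤ wedgeLen c₁ c₂ by linarith
    refine hmax ⟨by linarith, by linarith, by linarith, fun t ht => ?_⟩
    rcases le_total t (cancelAmt k c₁) with hta | hat
    · rw [← hcancel₁ t ⟨ht.1, hta⟩, hcancel₂ t ⟨ht.1, hta⟩]
    · have hcont := hagree' (k.len - cancelAmt k c₁ + (t - cancelAmt k c₁))
        ⟨by linarith, by linarith [ht.2]⟩
      rw [hright₁ _ ⟨by linarith, by linarith [ht.2]⟩,
        hright₂ _ ⟨by linarith, by linarith [ht.2]⟩] at hcont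
      convert hcont using 2 <;> ring
  · rcases le_total t (k.len - cancelAmt k c₁) with hta | hat
    · rw [hleft₁ t ⟨ht.1, hta⟩, hleft₂ t ⟨ht.1, hta⟩]
    · rw [hright₁ t ⟨hat, by linarith [ht.2]⟩, hright₂ t ⟨hat, by linarith [ht.2]⟩]
      exact hagree _ ⟨by linarith, by linarith [ht.2]⟩

theorem rhoDist_eq (hm₁ : IsCancelConcat k c₁ m₁) (hm₂ : IsCancelConcat k c₂ m₂)
    (hk₁ : k.toFun k.len = c₁.toFun 0) (hk₂ : k.toFun k.len = c₂.toFun 0) :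
    rhoDist m₁ m₂ = rhoDist c₁ c₂ := by
  wlog hle : cancelAmt k c₁ ≤ cancelAmt k c₂ generalizing c₁ c₂ m₁ m₂
  · rw [rhoDist_comm m₁, rhoDist_comm c₁]
    exact this hm₂ hm₁ hk₂ hk₁ (le_of_not_ge hle)
  rw [rhoDist, rhoDist, hm₁.1, hm₂.1]
  rcases hle.lt_or_eq with hlt | heq
  · rw [hm₁.wedgeLen_eq_of_lt hm₂ hk₁ hk₂ hlt, wedgeLen_eq_cancelAmt_of_lt hk₁ hk₂ hlt]
    ring
  · rw [hm₁.wedgeLen_eq_of_eq hm₂ hk₁ hk₂ heq, ← heq]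
    ring

end IsCancelConcat

end CancelConcat

end RPath

theorem basepoint_change_isometry_general {X : Type*} [MetricSpace X]
    (base base' : X) (k : RPath X) (hk0 : k.StartsAt base') (hk1 : k.EndsAt base)
    (T : RPath X → RPath X) (hT : ∀ c : RPath X, c.StartsAt base → RPath.IsCancelConcat k c (T c)) :
    (∀ c₁ c₂ : RPath X, c₁.StartsAt base → c₂.StartsAt base →
      RPath.rhoDist (T c₁) (T c₂) = RPath.rhoDist c₁ c₂) ∧
    (∀ c₁ c₂ : RPath X, c₁.StartsAt base → c₂.StartsAt base → T c₁ = T c₂ → c₁ = c₂) ∧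
    (∀ d : RPath X, d.StartsAt base' → ∃ c : RPath X, c.StartsAt base ∧ T c = d) ∧
    (∀ c : RPath X, c.StartsAt base →
      (T c).toFun (T c).len = c.toFun c.len) := by
  have hkc : ∀ {c : RPath X}, c.StartsAt base → k.toFun k.len = c.toFun 0 := fun hc =>
    hk1.trans (Eq.symm hc)
  have hdist : ∀ c₁ c₂ : RPath X, c₁.StartsAt base → c₂.StartsAt base →
      RPath.rhoDist (T c₁) (T c₂) = RPath.rhoDist c₁ c₂ := fun c₁ c₂ hc₁ hc₂ =>
    (hT c₁ hc₁).rhoDist_eq (hT c₂ hc₂) (hkc hc₁) (hkc hc₂)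
  refine ⟨hdist, fun c₁ c₂ hc₁ hc₂ heq => ?_, fun d hd => ?_, fun c hc =>
    (hT c hc).toFun_len (hkc hc)⟩
  · refine RPath.eq_of_rhoDist_eq_zero ((hkc hc₁).symm.trans (hkc hc₂)) ?_
    rw [← hdist c₁ c₂ hc₁ hc₂, heq, RPath.rhoDist_self]
  · obtain ⟨r, hr⟩ := k.exists_isReverse
    have hrd : r.toFun r.len = d.toFun 0 := by
      rw [hr.1, hr.2 k.len (right_mem_Icc.2 k.len_nonneg), sub_self]
      exact hk0.trans (Eq.symm hd)
    obtain ⟨c, hc⟩ := RPath.exists_isCancelConcat hrd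
    have hcbase : c.StartsAt base := by
      rw [RPath.StartsAt, hc.toFun_zero hrd, hr.2 0 (left_mem_Icc.2 k.len_nonneg), sub_zero]
      exact hk1
    exact ⟨c, hcbase, (hT c hcbase).eq_of_isReverse hc hr.symm hrd⟩

/-- For a length space `X` with basepoints `*` and `*'`, any ρ-path
`k` from `*'` to `*` induces an isometry `c ↦ k ⋆ c` from `(X̄, *)` onto `(X̄, *')`,
and composing this isometry with the endpoint map gives the endpoint map on
`(X̄, *)`. -/
theorem basepoint_change_isometry {X : Type*} [MetricSpace X] (hX : IsLengthSpace X)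
    (base base' : X) (k : RPath X) (hk0 : k.StartsAt base') (hk1 : k.EndsAt base)
    (T : RPath X → RPath X)
    (hT : ∀ c : RPath X, c.StartsAt base →
      RPath.IsCancelConcat k c (T c) ∧ (T c).StartsAt base') :
    -- `T` preserves distances
    (∀ c₁ c₂ : RPath X, c₁.StartsAt base → c₂.StartsAt base →
      RPath.rhoDist (T c₁) (T c₂) = RPath.rhoDist c₁ c₂) ∧
    -- `T` is injective and onto `(X̄, *')`
    (∀ c₁ c₂ : RPath X, c₁.StartsAt base → c₂.StartsAt base → T c₁ = T c₂ → c₁ = c₂) ∧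
    (∀ d : RPath X, d.StartsAt base' → ∃ c : RPath X, c.StartsAt base ∧ T c = d) ∧
    -- composing with the endpoint map gives the endpoint map
    (∀ c : RPath X, c.StartsAt base →
      (T c).toFun (T c).len = c.toFun c.len) := by
  exact basepoint_change_isometry_general base base' k hk0 hk1 T fun c hc => (hT c hc).1
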